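/- arXiv:2510.17216 — 2 statements merged into one kernel-verified Lean document; each statement's English description precedes it below -/
import Mathlib

section
/- Let (H, α) be a monoidal Hom-bialgebra, (A, β) a left (H, α)-Hom-comodule coalgebra with coaction ρ(a) = a₍₋₁₎ ⊗ a₍₀₎, and m an integer. Then the left m-Hom-smash coproduct (A ⋊ H, β ⊗ α), with comultiplication Δ(a ⋊ h) = (a₁ ⋊ α^m(a₂₍₋₁₎)α⁻¹(h₁)) ⊗ (β(a₂₍₀₎) ⋊ h₂) and counit ε(a ⋊ h) = ε(a)ε(h), is a monoidal Hom-coalgebra. -/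
open TensorProduct

noncomputable section

/-- A monoidal Hom-algebra `(A, β)`. -/
structure HomAlgebraStr (K : Type*) (A : Type*) [Field K] [AddCommGroup A] [Module K A] where
  mul : A →ₗ[K] A →ₗ[K] A
  one : A
  str : A ≃ₗ[K] A
  hom_assoc : ∀ a b c : A, mul (str a) (mul b c) = mul (mul a b) (str c)
  str_mul : ∀ a b : A, str (mul a b) = mul (str a) (str b)
  mul_one : ∀ a : A, mul a one = str a
  one_mul : ∀ a : A, mul one a = str a
  str_one : str one = one

/-- A monoidal Hom-coalgebra `(C, γ)`. -/
structure HomCoalgebraStr (K : Type*) (C : Type*) [Field K] [AddCommGroup C] [Module K C] where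
  comul : C →ₗ[K] C ⊗[K] C
  counit : C →ₗ[K] K
  str : C ≃ₗ[K] C
  hom_coassoc : ∀ c : C,
    TensorProduct.map str.symm.toLinearMap comul (comul c)
      = TensorProduct.assoc K C C C (TensorProduct.map comul str.symm.toLinearMap (comul c))
  comul_str : ∀ c : C, comul (str c) = TensorProduct.map str.toLinearMap str.toLinearMap (comul c)
  counit_comul_left : ∀ c : C,
    TensorProduct.lid K C (TensorProduct.map counit (LinearMap.id : C →ₗ[K] C) (comul c)) = str.symm c
  counit_comul_right : ∀ c : C,
    TensorProduct.rid K C (TensorProduct.map (LinearMap.id : C →ₗ[K] C) counit (comul c)) = str.symm c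
  counit_str : ∀ c : C, counit (str c) = counit c

/-- The componentwise multiplication on `N ⊗ N` induced by a bilinear multiplication on `N`. -/
def tensorSquareMul {K N : Type*} [Field K] [AddCommGroup N] [Module K N]
    (mul : N →ₗ[K] N →ₗ[K] N) :
    (N ⊗[K] N) →ₗ[K] (N ⊗[K] N) →ₗ[K] (N ⊗[K] N) :=
  TensorProduct.curry
    ((TensorProduct.map (TensorProduct.lift mul) (TensorProduct.lift mul)) ∘ₗ
      (TensorProduct.tensorTensorTensorComm K N N N N).toLinearMap)

/-- A monoidal Hom-bialgebra `(H, α)`. -/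
structure HomBialgebraStr (K : Type*) (H : Type*) [Field K] [AddCommGroup H] [Module K H]
    extends HomAlgebraStr K H where
  comul : H →ₗ[K] H ⊗[K] H
  counit : H →ₗ[K] K
  hom_coassoc : ∀ c : H,
    TensorProduct.map str.symm.toLinearMap comul (comul c)
      = TensorProduct.assoc K H H H (TensorProduct.map comul str.symm.toLinearMap (comul c))
  comul_str : ∀ c : H, comul (str c) = TensorProduct.map str.toLinearMap str.toLinearMap (comul c)
  counit_comul_left : ∀ c : H,
    TensorProduct.lid K H (TensorProduct.map counit (LinearMap.id : H →ₗ[K] H) (comul c)) = str.symm c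
  counit_comul_right : ∀ c : H,
    TensorProduct.rid K H (TensorProduct.map (LinearMap.id : H →ₗ[K] H) counit (comul c)) = str.symm c
  counit_str : ∀ c : H, counit (str c) = counit c
  comul_mul : ∀ a b : H, comul (mul a b) = tensorSquareMul mul (comul a) (comul b)
  comul_one : comul one = one ⊗ₜ[K] one
  counit_mul : ∀ a b : H, counit (mul a b) = counit a * counit b
  counit_one : counit one = 1

/-- A monoidal Hom-Hopf algebra `(H, α, S)`. -/
structure HomHopfStr (K : Type*) (H : Type*) [Field K] [AddCommGroup H] [Module K H]
    extends HomBialgebraStr K H where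
  antipode : H →ₗ[K] H
  antipode_str : ∀ h : H, antipode (str h) = str (antipode h)
  antipode_mul_left : ∀ h : H,
    TensorProduct.lift (mul ∘ₗ antipode) (comul h) = counit h • one
  antipode_mul_right : ∀ h : H,
    TensorProduct.lift (mul.compl₂ antipode) (comul h) = counit h • one

section Defs

variable {K H A C M : Type*} [Field K]
variable [AddCommGroup H] [Module K H] [AddCommGroup A] [Module K A]
variable [AddCommGroup C] [Module K C] [AddCommGroup M] [Module K M]

/-- `(A, β)` is a left weak `(H, α)`-Hom-module algebra via `act`:
`h·(ab) = (h₁·a)(h₂·b)` and `h·1 = ε(h)1`. -/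
structure IsWeakModuleAlgebra (HB : HomBialgebraStr K H) (AA : HomAlgebraStr K A)
    (act : H →ₗ[K] A →ₗ[K] A) : Prop where
  act_mul : ∀ (h : H) (a b : A),
    act h (AA.mul a b)
      = TensorProduct.lift AA.mul
          (TensorProduct.map (TensorProduct.lift act) (TensorProduct.lift act)
            (TensorProduct.map ((TensorProduct.mk K H A).flip a) ((TensorProduct.mk K H A).flip b)
              (HB.comul h)))
  act_one : ∀ h : H, act h AA.one = HB.counit h • AA.one

/-- `(C, β)` is a left `(H, α)`-Hom-comodule coalgebra via `coact a = a₍₋₁₎ ⊗ a₍₀₎`. -/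
structure IsComoduleCoalgebra (HB : HomBialgebraStr K H) (CC : HomCoalgebraStr K C)
    (coact : C →ₗ[K] H ⊗[K] C) : Prop where
  comodule_coassoc : ∀ c : C,
    TensorProduct.assoc K H H C
        (TensorProduct.map HB.comul CC.str.symm.toLinearMap (coact c))
      = TensorProduct.map HB.str.symm.toLinearMap coact (coact c)
  coact_str : ∀ c : C,
    coact (CC.str c) = TensorProduct.map HB.str.toLinearMap CC.str.toLinearMap (coact c)
  counit_coact : ∀ c : C,
    TensorProduct.lid K C (TensorProduct.map HB.counit (LinearMap.id : C →ₗ[K] C) (coact c))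
      = CC.str.symm c
  coact_comul : ∀ c : C,
    TensorProduct.map (LinearMap.id : H →ₗ[K] H) CC.comul (coact c)
      = TensorProduct.map (TensorProduct.lift HB.mul) (LinearMap.id : C ⊗[K] C →ₗ[K] C ⊗[K] C)
          (TensorProduct.tensorTensorTensorComm K H C H C
            (TensorProduct.map coact coact (CC.comul c)))
  counit_coact_one : ∀ c : C,
    TensorProduct.rid K H (TensorProduct.map (LinearMap.id : H →ₗ[K] H) CC.counit (coact c))
      = CC.counit c • HB.one

/-- The `(m,k)`-Hom-crossed product multiplication on simple tensors:
`(a ♯ h)(b ♯ g) = a[(α^m(h₁₁)·β⁻²(b)) σ(α^{k+1}(h₁₂), α^k(g₁))] ♯ α(h₂g₂)`. -/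
def cpMulElem (HB : HomBialgebraStr K H) (AA : HomAlgebraStr K A)
    (act : H →ₗ[K] A →ₗ[K] A) (σ : H →ₗ[K] H →ₗ[K] A) (m k : ℤ)
    (a : A) (h : H) (b : A) (g : H) : A ⊗[K] H :=
  TensorProduct.map
    ((AA.mul a) ∘ₗ TensorProduct.lift AA.mul ∘ₗ
      TensorProduct.map
        ((act.flip ((AA.str ^ (-2 : ℤ)) b)) ∘ₗ (HB.str ^ m).toLinearMap)
        (TensorProduct.lift σ ∘ₗ
          TensorProduct.map (HB.str ^ (k+1)).toLinearMap (HB.str ^ k).toLinearMap) ∘ₗ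
      (TensorProduct.assoc K H H H).toLinearMap)
    (HB.str.toLinearMap ∘ₗ TensorProduct.lift HB.mul)
    (TensorProduct.map (TensorProduct.map HB.comul (LinearMap.id : H →ₗ[K] H))
      (LinearMap.id : H ⊗[K] H →ₗ[K] H ⊗[K] H)
      (TensorProduct.tensorTensorTensorComm K H H H H (HB.comul h ⊗ₜ[K] HB.comul g)))

/-- The `m`-Hom-smash product multiplication on simple tensors:
`(a ♯ h)(b ♯ g) = a(α^m(h₁)·β⁻¹(b)) ♯ α(h₂)g`. -/
def smashMulElem (HB : HomBialgebraStr K H) (AA : HomAlgebraStr K A)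
    (act : H →ₗ[K] A →ₗ[K] A) (m : ℤ) (a : A) (h : H) (b : A) (g : H) : A ⊗[K] H :=
  TensorProduct.map
    ((AA.mul a) ∘ₗ (act.flip ((AA.str ^ (-1 : ℤ)) b)) ∘ₗ (HB.str ^ m).toLinearMap)
    ((HB.mul.flip g) ∘ₗ HB.str.toLinearMap)
    (HB.comul h)

/-- The `m`-Hom-smash coproduct comultiplication on simple tensors:
`Δ(a ⋊ h) = (a₁ ⋊ α^m(a₂₍₋₁₎)α⁻¹(h₁)) ⊗ (β(a₂₍₀₎) ⋊ h₂)`. -/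
def scComulElem (HB : HomBialgebraStr K H) (AC : HomCoalgebraStr K A)
    (coact : A →ₗ[K] H ⊗[K] A) (m : ℤ) (a : A) (h : H) :
    (A ⊗[K] H) ⊗[K] (A ⊗[K] H) :=
  TensorProduct.map
    (TensorProduct.map (LinearMap.id : A →ₗ[K] A)
        (TensorProduct.lift HB.mul ∘ₗ
          TensorProduct.map (HB.str ^ m).toLinearMap (HB.str ^ (-1 : ℤ)).toLinearMap) ∘ₗ
      (TensorProduct.assoc K A H H).toLinearMap)
    (TensorProduct.map AC.str.toLinearMap (LinearMap.id : H →ₗ[K] H))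
    (TensorProduct.tensorTensorTensorComm K (A ⊗[K] H) A H H
      ((TensorProduct.assoc K A H A).symm
          (TensorProduct.map (LinearMap.id : A →ₗ[K] A) coact (AC.comul a)) ⊗ₜ[K] HB.comul h))

/-- Condition (1) of Theorem 2.3. -/
def CPCond1 (HB : HomBialgebraStr K H) (AA : HomAlgebraStr K A)
    (σ : H →ₗ[K] H →ₗ[K] A) : Prop :=
  (∀ h : H, σ h HB.one = HB.counit h • AA.one) ∧
  (∀ h : H, σ HB.one h = HB.counit h • AA.one) ∧
  (∀ h g : H, σ (HB.str h) (HB.str g) = AA.str (σ h g))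

/-- Condition (2) of Theorem 2.3:
`[α^m(h₁l₁)·a] σ(α^{k+2}(h₂), α^{k+2}(l₂)) = σ(α^{k+2}(h₁), α^{k+2}(l₁)) [α^m(h₂l₂)·a]`. -/
def CPCond2 (HB : HomBialgebraStr K H) (AA : HomAlgebraStr K A)
    (act : H →ₗ[K] A →ₗ[K] A) (σ : H →ₗ[K] H →ₗ[K] A) (m k : ℤ) : Prop :=
  ∀ (h l : H) (a : A),
    TensorProduct.lift AA.mul
      (TensorProduct.map
        ((act.flip a) ∘ₗ (HB.str ^ m).toLinearMap ∘ₗ TensorProduct.lift HB.mul)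
        (TensorProduct.lift σ ∘ₗ
          TensorProduct.map (HB.str ^ (k+2)).toLinearMap (HB.str ^ (k+2)).toLinearMap)
        (TensorProduct.tensorTensorTensorComm K H H H H (HB.comul h ⊗ₜ[K] HB.comul l)))
    =
    TensorProduct.lift AA.mul
      (TensorProduct.map
        (TensorProduct.lift σ ∘ₗ
          TensorProduct.map (HB.str ^ (k+2)).toLinearMap (HB.str ^ (k+2)).toLinearMap)
        ((act.flip a) ∘ₗ (HB.str ^ m).toLinearMap ∘ₗ TensorProduct.lift HB.mul)
        (TensorProduct.tensorTensorTensorComm K H H H H (HB.comul h ⊗ₜ[K] HB.comul l)))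

/-- Condition (3) of Theorem 2.3:
`[α^{m+1}(h₁)·σ(α^{k+1}(l₁), α^{k+1}(g₁))] σ(α^{k+2}(h₂), α^{k+1}(l₂g₂))
  = σ(α^{k+2}(h₁), α^{k+2}(l₁)) σ(α^{k+1}(h₂l₂), α^{k+1}(g))`. -/
def CPCond3 (HB : HomBialgebraStr K H) (AA : HomAlgebraStr K A)
    (act : H →ₗ[K] A →ₗ[K] A) (σ : H →ₗ[K] H →ₗ[K] A) (m k : ℤ) : Prop :=
  ∀ h l g : H,
    TensorProduct.lift AA.mul
      (TensorProduct.map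
        (TensorProduct.lift act ∘ₗ
          TensorProduct.map (HB.str ^ (m+1)).toLinearMap
            (TensorProduct.lift σ ∘ₗ
              TensorProduct.map (HB.str ^ (k+1)).toLinearMap (HB.str ^ (k+1)).toLinearMap))
        (TensorProduct.lift σ ∘ₗ
          TensorProduct.map (HB.str ^ (k+2)).toLinearMap
            ((HB.str ^ (k+1)).toLinearMap ∘ₗ TensorProduct.lift HB.mul))
        (TensorProduct.tensorTensorTensorComm K H H (H ⊗[K] H) (H ⊗[K] H)
          (HB.comul h ⊗ₜ[K]
            (TensorProduct.tensorTensorTensorComm K H H H H (HB.comul l ⊗ₜ[K] HB.comul g)))))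
    =
    TensorProduct.lift AA.mul
      (TensorProduct.map
        (TensorProduct.lift σ ∘ₗ
          TensorProduct.map (HB.str ^ (k+2)).toLinearMap (HB.str ^ (k+2)).toLinearMap)
        ((σ.flip ((HB.str ^ (k+1)) g)) ∘ₗ (HB.str ^ (k+1)).toLinearMap ∘ₗ TensorProduct.lift HB.mul)
        (TensorProduct.tensorTensorTensorComm K H H H H (HB.comul h ⊗ₜ[K] HB.comul l)))

/-- `σ` is a twisted comodule cocycle:
`β(a₁) ⊗ α^{m+1}(a₂₍₋₁₎)g ⊗ a₂₍₀₎
  = a₁σ(α^{k+m+2}(a₂₍₋₁₎₁), α^{k+1}(g₁)) ⊗ α^{m+2}(a₂₍₋₁₎₂)α(g₂) ⊗ a₂₍₀₎`. -/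
def IsTwistedCocycle (HB : HomBialgebraStr K H) (AA : HomAlgebraStr K A)
    (AC : HomCoalgebraStr K A) (coact : A →ₗ[K] H ⊗[K] A)
    (σ : H →ₗ[K] H →ₗ[K] A) (m k : ℤ) : Prop :=
  ∀ (a : A) (g : H),
    (TensorProduct.assoc K A H A).symm
      (TensorProduct.map AA.str.toLinearMap
        (TensorProduct.map ((HB.mul.flip g) ∘ₗ (HB.str ^ (m+1)).toLinearMap)
          (LinearMap.id : A →ₗ[K] A))
        (TensorProduct.map (LinearMap.id : A →ₗ[K] A) coact (AC.comul a)))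
    =
    TensorProduct.map
      (TensorProduct.map (TensorProduct.lift AA.mul) (LinearMap.id : H →ₗ[K] H)
        ∘ₗ (TensorProduct.assoc K A A H).symm.toLinearMap
        ∘ₗ TensorProduct.map (LinearMap.id : A →ₗ[K] A)
            (TensorProduct.map
              (TensorProduct.lift σ ∘ₗ
                TensorProduct.map (HB.str ^ (k+m+2)).toLinearMap (HB.str ^ (k+1)).toLinearMap)
              (TensorProduct.lift HB.mul ∘ₗ
                TensorProduct.map (HB.str ^ (m+2)).toLinearMap HB.str.toLinearMap)
            ∘ₗ (TensorProduct.tensorTensorTensorComm K H H H H).toLinearMap)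
        ∘ₗ (TensorProduct.assoc K A (H ⊗[K] H) (H ⊗[K] H)).toLinearMap)
      (LinearMap.id : A →ₗ[K] A)
      ((TensorProduct.assoc K (A ⊗[K] (H ⊗[K] H)) (H ⊗[K] H) A).symm
        (TensorProduct.map (LinearMap.id : A ⊗[K] (H ⊗[K] H) →ₗ[K] A ⊗[K] (H ⊗[K] H))
          (TensorProduct.comm K A (H ⊗[K] H)).toLinearMap
          (TensorProduct.assoc K (A ⊗[K] (H ⊗[K] H)) A (H ⊗[K] H)
            ((TensorProduct.assoc K A (H ⊗[K] H) A).symm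
                (TensorProduct.map (LinearMap.id : A →ₗ[K] A)
                  (TensorProduct.map HB.comul (LinearMap.id : A →ₗ[K] A))
                  (TensorProduct.map (LinearMap.id : A →ₗ[K] A) coact (AC.comul a)))
              ⊗ₜ[K] HB.comul g))))

/-- Auxiliary map `(n ⊗ w) ⊗ t ↦ (α^j(n)·t) ⊗ f(w)` on `(H ⊗ M) ⊗ H`. -/
def coactMulAux (HB : HomBialgebraStr K H) (j : ℤ) (f : M →ₗ[K] M) :
    (H ⊗[K] M) ⊗[K] H →ₗ[K] H ⊗[K] M :=
  TensorProduct.map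
      (TensorProduct.lift HB.mul ∘ₗ
        TensorProduct.map (HB.str ^ j).toLinearMap (LinearMap.id : H →ₗ[K] H)) f
    ∘ₗ (TensorProduct.assoc K H H M).symm.toLinearMap
    ∘ₗ TensorProduct.map (LinearMap.id : H →ₗ[K] H) (TensorProduct.comm K M H).toLinearMap
    ∘ₗ (TensorProduct.assoc K H M H).toLinearMap

/-- (A1): `ε_A` is an algebra map. -/
def CondA1 (AA : HomAlgebraStr K A) (AC : HomCoalgebraStr K A) : Prop :=
  (∀ a b : A, AC.counit (AA.mul a b) = AC.counit a * AC.counit b) ∧ AC.counit AA.one = 1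

/-- (A2): `ε_A(h·a) = ε_H(h)ε_A(a)`. -/
def CondA2 (HB : HomBialgebraStr K H) (AC : HomCoalgebraStr K A)
    (act : H →ₗ[K] A →ₗ[K] A) : Prop :=
  ∀ (h : H) (a : A), AC.counit (act h a) = HB.counit h * AC.counit a

/-- (A3): `σ` is a coalgebra map. -/
def CondA3 (HB : HomBialgebraStr K H) (AC : HomCoalgebraStr K A)
    (σ : H →ₗ[K] H →ₗ[K] A) : Prop :=
  (∀ h g : H,
    AC.comul (σ h g)
      = TensorProduct.map (TensorProduct.lift σ) (TensorProduct.lift σ)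
          (TensorProduct.tensorTensorTensorComm K H H H H (HB.comul h ⊗ₜ[K] HB.comul g))) ∧
  (∀ h g : H, AC.counit (σ h g) = HB.counit h * HB.counit g)

/-- (A4): `Δ_A(1_A) = 1_A ⊗ 1_A`. -/
def CondA4 (AA : HomAlgebraStr K A) (AC : HomCoalgebraStr K A) : Prop :=
  AC.comul AA.one = AA.one ⊗ₜ[K] AA.one

/-- (A5): the coaction is an algebra map. -/
def CondA5 (HB : HomBialgebraStr K H) (AA : HomAlgebraStr K A)
    (coact : A →ₗ[K] H ⊗[K] A) : Prop :=
  (∀ a b : A,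
    coact (AA.mul a b)
      = TensorProduct.map (TensorProduct.lift HB.mul) (TensorProduct.lift AA.mul)
          (TensorProduct.tensorTensorTensorComm K H A H A (coact a ⊗ₜ[K] coact b))) ∧
  coact AA.one = HB.one ⊗ₜ[K] AA.one

/-- (A6). -/
def CondA6 (HB : HomBialgebraStr K H) (coact : A →ₗ[K] H ⊗[K] A)
    (σ : H →ₗ[K] H →ₗ[K] A) (m k : ℤ) : Prop :=
  ∀ h g : H,
    coactMulAux HB (m-1) (LinearMap.id : A →ₗ[K] A)
      (TensorProduct.map
        (coact ∘ₗ TensorProduct.lift σ ∘ₗ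
          TensorProduct.map (HB.str ^ (k+2)).toLinearMap (HB.str ^ (k+2)).toLinearMap)
        ((HB.str ^ (-1 : ℤ)).toLinearMap ∘ₗ TensorProduct.lift HB.mul)
        (TensorProduct.tensorTensorTensorComm K H H H H (HB.comul h ⊗ₜ[K] HB.comul g)))
    =
    TensorProduct.map (TensorProduct.lift HB.mul)
      (TensorProduct.lift σ ∘ₗ
        TensorProduct.map (HB.str ^ (k+1)).toLinearMap (HB.str ^ (k+1)).toLinearMap)
      (TensorProduct.tensorTensorTensorComm K H H H H (HB.comul h ⊗ₜ[K] HB.comul g))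

/-- (A7). -/
def CondA7 (HB : HomBialgebraStr K H) (AA : HomAlgebraStr K A) (AC : HomCoalgebraStr K A)
    (act : H →ₗ[K] A →ₗ[K] A) (coact : A →ₗ[K] H ⊗[K] A)
    (σ : H →ₗ[K] H →ₗ[K] A) (m k : ℤ) : Prop :=
  ∀ a b : A,
    AC.comul (AA.mul a b) =
      TensorProduct.map
        (TensorProduct.lift AA.mul
          ∘ₗ TensorProduct.map (LinearMap.id : A →ₗ[K] A)
              (TensorProduct.lift AA.mul
                ∘ₗ TensorProduct.map
                    (TensorProduct.lift act ∘ₗ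
                      TensorProduct.map (HB.str ^ (2*m)).toLinearMap (AA.str ^ (-2 : ℤ)).toLinearMap)
                    (TensorProduct.lift σ ∘ₗ
                      TensorProduct.map (HB.str ^ (k+m+1)).toLinearMap (HB.str ^ (k+m)).toLinearMap)
                ∘ₗ (TensorProduct.tensorTensorTensorComm K H H A H).toLinearMap)
          ∘ₗ (TensorProduct.assoc K A (H ⊗[K] H) (A ⊗[K] H)).toLinearMap)
        (AA.str.toLinearMap ∘ₗ TensorProduct.lift AA.mul)
        (TensorProduct.tensorTensorTensorComm K (A ⊗[K] (H ⊗[K] H)) A (A ⊗[K] H) A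
          ((TensorProduct.assoc K A (H ⊗[K] H) A).symm
              (TensorProduct.map (LinearMap.id : A →ₗ[K] A)
                (TensorProduct.map HB.comul (LinearMap.id : A →ₗ[K] A))
                (TensorProduct.map (LinearMap.id : A →ₗ[K] A) coact (AC.comul a)))
            ⊗ₜ[K]
            (TensorProduct.assoc K A H A).symm
              (TensorProduct.map (LinearMap.id : A →ₗ[K] A) coact (AC.comul b))))

/-- (A8). -/
def CondA8 (HB : HomBialgebraStr K H) (AA : HomAlgebraStr K A) (AC : HomCoalgebraStr K A)
    (act : H →ₗ[K] A →ₗ[K] A) (coact : A →ₗ[K] H ⊗[K] A)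
    (σ : H →ₗ[K] H →ₗ[K] A) (m k : ℤ) : Prop :=
  ∀ (h : H) (b : A),
    AC.comul (act ((HB.str ^ m) h) b) =
      TensorProduct.map
        (TensorProduct.lift AA.mul
          ∘ₗ TensorProduct.map
              (TensorProduct.lift act ∘ₗ
                TensorProduct.map (HB.str ^ m).toLinearMap (AA.str ^ (-1 : ℤ)).toLinearMap)
              (TensorProduct.lift σ ∘ₗ
                TensorProduct.map (HB.str ^ (k+1)).toLinearMap (HB.str ^ (k+m+1)).toLinearMap)
          ∘ₗ (TensorProduct.tensorTensorTensorComm K H H A H).toLinearMap)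
        (TensorProduct.lift act ∘ₗ
          TensorProduct.map (HB.str ^ m).toLinearMap AA.str.toLinearMap)
        (TensorProduct.tensorTensorTensorComm K (H ⊗[K] H) H (A ⊗[K] H) A
          (TensorProduct.map HB.comul (LinearMap.id : H →ₗ[K] H) (HB.comul h)
            ⊗ₜ[K]
            (TensorProduct.assoc K A H A).symm
              (TensorProduct.map (LinearMap.id : A →ₗ[K] A) coact (AC.comul b))))

/-- (A9). -/
def CondA9 (HB : HomBialgebraStr K H) (act : H →ₗ[K] A →ₗ[K] A)
    (coact : A →ₗ[K] H ⊗[K] A) (m : ℤ) : Prop :=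
  ∀ (h : H) (b : A),
    coactMulAux HB (m-1) (LinearMap.id : A →ₗ[K] A)
      (TensorProduct.map (coact ∘ₗ (act.flip b) ∘ₗ (HB.str ^ (m+1)).toLinearMap)
        (LinearMap.id : H →ₗ[K] H) (HB.comul h))
    =
    TensorProduct.map
      (TensorProduct.lift HB.mul ∘ₗ
        TensorProduct.map (LinearMap.id : H →ₗ[K] H) (HB.str ^ m).toLinearMap)
      (TensorProduct.lift act ∘ₗ
        TensorProduct.map (HB.str ^ m).toLinearMap (LinearMap.id : A →ₗ[K] A))
      (TensorProduct.tensorTensorTensorComm K H H H A (HB.comul h ⊗ₜ[K] coact b))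

/-- The Radford `[(m,k),m]`-biproduct structure on `A ⊗ H`. -/
structure IsRadfordBiproduct (HB : HomBialgebraStr K H) (AA : HomAlgebraStr K A)
    (AC : HomCoalgebraStr K A) (act : H →ₗ[K] A →ₗ[K] A) (coact : A →ₗ[K] H ⊗[K] A)
    (σ : H →ₗ[K] H →ₗ[K] A) (m k : ℤ) (B : HomBialgebraStr K (A ⊗[K] H)) : Prop where
  mul_def : ∀ (a : A) (h : H) (b : A) (g : H),
    B.mul (a ⊗ₜ[K] h) (b ⊗ₜ[K] g) = cpMulElem HB AA act σ m k a h b g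
  one_def : B.one = AA.one ⊗ₜ[K] HB.one
  comul_def : ∀ (a : A) (h : H), B.comul (a ⊗ₜ[K] h) = scComulElem HB AC coact m a h
  counit_def : ∀ (a : A) (h : H), B.counit (a ⊗ₜ[K] h) = AC.counit a * HB.counit h
  str_def : B.str = TensorProduct.congr AA.str HB.str

/-- `S_H` is a `σ`-antipode for `(H, α)`. -/
structure IsSigmaAntipode (HB : HomBialgebraStr K H) (AA : HomAlgebraStr K A)
    (σ : H →ₗ[K] H →ₗ[K] A) (S : H →ₗ[K] H) : Prop where
  antipode_str : ∀ h : H, S (HB.str h) = HB.str (S h)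
  right : ∀ h : H,
    TensorProduct.map (TensorProduct.lift σ) (TensorProduct.lift HB.mul)
        (TensorProduct.tensorTensorTensorComm K H H H H
          (TensorProduct.map HB.comul (HB.comul ∘ₗ S) (HB.comul h)))
      = HB.counit h • (AA.one ⊗ₜ[K] HB.one)
  left : ∀ h : H,
    TensorProduct.map (TensorProduct.lift σ) (TensorProduct.lift HB.mul)
        (TensorProduct.tensorTensorTensorComm K H H H H
          (TensorProduct.map (HB.comul ∘ₗ S) HB.comul (HB.comul h)))
      = HB.counit h • (AA.one ⊗ₜ[K] HB.one)

/-- `S_A` is a convolution inverse of `id_A`. -/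
def IsConvInvOfId (AA : HomAlgebraStr K A) (AC : HomCoalgebraStr K A)
    (SA : A →ₗ[K] A) : Prop :=
  (∀ a : A, TensorProduct.lift (AA.mul ∘ₗ SA) (AC.comul a) = AC.counit a • AA.one) ∧
  (∀ a : A, TensorProduct.lift (AA.mul.compl₂ SA) (AC.comul a) = AC.counit a • AA.one)

/-- `σ` and `σinv` are convolution inverses of each other. -/
def IsConvInvPair (HB : HomBialgebraStr K H) (AA : HomAlgebraStr K A)
    (σ σinv : H →ₗ[K] H →ₗ[K] A) : Prop :=
  (∀ h g : H,
    TensorProduct.lift AA.mul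
      (TensorProduct.map (TensorProduct.lift σ) (TensorProduct.lift σinv)
        (TensorProduct.tensorTensorTensorComm K H H H H (HB.comul h ⊗ₜ[K] HB.comul g)))
    = (HB.counit h * HB.counit g) • AA.one) ∧
  (∀ h g : H,
    TensorProduct.lift AA.mul
      (TensorProduct.map (TensorProduct.lift σinv) (TensorProduct.lift σ)
        (TensorProduct.tensorTensorTensorComm K H H H H (HB.comul h ⊗ₜ[K] HB.comul g)))
    = (HB.counit h * HB.counit g) • AA.one)

/-- The Radford antipode formula
`S(a ⊗ h) = (1_A ⊗ S_H(α^{m−1}(a₍₋₁₎)α⁻²(h)))·(S_A(a₍₀₎) ⊗ 1_H)`. -/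
def radfordAntipodeElem (HB : HomBialgebraStr K H) (AA : HomAlgebraStr K A)
    (coact : A →ₗ[K] H ⊗[K] A)
    (Bmul : (A ⊗[K] H) →ₗ[K] (A ⊗[K] H) →ₗ[K] (A ⊗[K] H))
    (SH : H →ₗ[K] H) (SA : A →ₗ[K] A) (m : ℤ) (a : A) (h : H) : A ⊗[K] H :=
  TensorProduct.lift Bmul
    (TensorProduct.map
      ((TensorProduct.mk K A H AA.one) ∘ₗ SH ∘ₗ (HB.mul.flip ((HB.str ^ (-2 : ℤ)) h)) ∘ₗ
        (HB.str ^ (m - 1)).toLinearMap)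
      (((TensorProduct.mk K A H).flip HB.one) ∘ₗ SA)
      (coact a))

/-- `φ^l(l ⊗ (a ⊗ h)) = (α(l₁₁)·β⁻¹(a)) σ(α^{k+2−m}(l₁₂), α^{k+1}(h₁)) ⊗ α^{1−m}(l₂)α(h₂)`. -/
def philElem (HB : HomBialgebraStr K H) (AA : HomAlgebraStr K A)
    (act : H →ₗ[K] A →ₗ[K] A) (σ : H →ₗ[K] H →ₗ[K] A) (m k : ℤ)
    (l : H) (a : A) (h : H) : A ⊗[K] H :=
  TensorProduct.map
    (TensorProduct.lift AA.mul ∘ₗ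
      TensorProduct.map ((act.flip ((AA.str ^ (-1 : ℤ)) a)) ∘ₗ HB.str.toLinearMap)
        (TensorProduct.lift σ ∘ₗ
          TensorProduct.map (HB.str ^ (k+2-m)).toLinearMap (HB.str ^ (k+1)).toLinearMap) ∘ₗ
      (TensorProduct.assoc K H H H).toLinearMap)
    (TensorProduct.lift HB.mul ∘ₗ
      TensorProduct.map (HB.str ^ (1-m)).toLinearMap HB.str.toLinearMap)
    (TensorProduct.map (TensorProduct.map HB.comul (LinearMap.id : H →ₗ[K] H))
      (LinearMap.id : H ⊗[K] H →ₗ[K] H ⊗[K] H)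
      (TensorProduct.tensorTensorTensorComm K H H H H (HB.comul l ⊗ₜ[K] HB.comul h)))

/-- `φ^r((a ⊗ h) ⊗ l) = a σ(α^{k+1}(h₁), α^{k+1−m}(l₁)) ⊗ α(h₂)α^{1−m}(l₂)`. -/
def phirElem (HB : HomBialgebraStr K H) (AA : HomAlgebraStr K A)
    (σ : H →ₗ[K] H →ₗ[K] A) (m k : ℤ) (a : A) (h : H) (l : H) : A ⊗[K] H :=
  TensorProduct.map
    ((AA.mul a) ∘ₗ TensorProduct.lift σ ∘ₗ
      TensorProduct.map (HB.str ^ (k+1)).toLinearMap (HB.str ^ (k+1-m)).toLinearMap)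
    (TensorProduct.lift HB.mul ∘ₗ
      TensorProduct.map HB.str.toLinearMap (HB.str ^ (1-m)).toLinearMap)
    (TensorProduct.tensorTensorTensorComm K H H H H (HB.comul h ⊗ₜ[K] HB.comul l))

/-- `(M, μ, φ)` is a left `(H, α, σ̄)`-Hom module. -/
def IsLeftSigmaHomModule (HB : HomBialgebraStr K H)
    (mulM : M →ₗ[K] M →ₗ[K] M) (strM : M →ₗ[K] M)
    (σbar : H →ₗ[K] H →ₗ[K] M) (φ : H →ₗ[K] M →ₗ[K] M) : Prop :=
  (∀ (g l : H) (x : M),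
    φ (HB.str g) (φ l x)
      = TensorProduct.lift mulM
          (TensorProduct.map (strM ∘ₗ TensorProduct.lift σbar)
            ((φ.flip x) ∘ₗ TensorProduct.lift HB.mul)
            (TensorProduct.tensorTensorTensorComm K H H H H (HB.comul g ⊗ₜ[K] HB.comul l))))
  ∧ (∀ x : M, φ HB.one x = strM x)

/-- `(M, μ, φ)` is a right `(H, α, σ̄)`-Hom module. -/
def IsRightSigmaHomModule (HB : HomBialgebraStr K H)
    (mulM : M →ₗ[K] M →ₗ[K] M) (strM : M →ₗ[K] M)
    (σbar : H →ₗ[K] H →ₗ[K] M) (φ : M →ₗ[K] H →ₗ[K] M) : Prop :=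
  (∀ (x : M) (l g : H),
    φ (φ x l) (HB.str g)
      = mulM (strM x)
          (TensorProduct.lift φ
            (TensorProduct.map (TensorProduct.lift σbar) (TensorProduct.lift HB.mul)
              (TensorProduct.tensorTensorTensorComm K H H H H (HB.comul l ⊗ₜ[K] HB.comul g)))))
  ∧ (∀ x : M, φ x HB.one = strM x)

/-- `(M, μ, φ⁺, φ⁻)` is a weak `(H, α)` Hom-bimodule. -/
def IsWeakHomBimodule (HB : HomBialgebraStr K H) (strM : M →ₗ[K] M)
    (φl : H →ₗ[K] M →ₗ[K] M) (φr : M →ₗ[K] H →ₗ[K] M) : Prop :=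
  (∀ x : M, φl HB.one x = strM x) ∧ (∀ x : M, φr x HB.one = strM x) ∧
  (∀ (h : H) (x : M) (g : H), φl (HB.str h) (φr x g) = φr (φl h x) (HB.str g))

/-- A weak `m`-Hom admissible mapping system `C ⇄ A ⇄ H`. -/
structure WeakAdmissibleSystem (HB : HomBialgebraStr K H)
    (CA : HomAlgebraStr K C) (CC : HomCoalgebraStr K C)
    (coact : C →ₗ[K] H ⊗[K] C) (m : ℤ) (AB : HomBialgebraStr K A)
    (j : C →ₗ[K] A) (p : A →ₗ[K] C) (i : H →ₗ[K] A) (π : A →ₗ[K] H) : Prop where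
  c_str_eq : CA.str = CC.str
  p_j : ∀ c : C, p (j c) = c
  pi_i : ∀ h : H, π (i h) = h
  pi_mul : ∀ a b : A, π (AB.mul a b) = HB.mul (π a) (π b)
  pi_one : π AB.one = HB.one
  pi_str : ∀ a : A, π (AB.str a) = HB.str (π a)
  pi_comul : ∀ a : A, TensorProduct.map π π (AB.comul a) = HB.comul (π a)
  pi_counit : ∀ a : A, HB.counit (π a) = AB.counit a
  i_one : i HB.one = AB.one
  i_str : ∀ h : H, i (HB.str h) = AB.str (i h)
  i_comul : ∀ h : H, TensorProduct.map i i (HB.comul h) = AB.comul (i h)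
  i_counit : ∀ h : H, AB.counit (i h) = HB.counit h
  p_str : ∀ a : A, p (AB.str a) = CC.str (p a)
  p_comul : ∀ a : A, TensorProduct.map p p (AB.comul a) = CC.comul (p a)
  p_counit : ∀ a : A, CC.counit (p a) = AB.counit a
  j_mul : ∀ c d : C, j (CA.mul c d) = AB.mul (j c) (j d)
  j_one : j CA.one = AB.one
  j_str : ∀ c : C, j (CC.str c) = AB.str (j c)
  p_left_act : ∀ (h : H) (a : A),
    p (AB.mul (i ((HB.str ^ (-m)) h)) a) = HB.counit h • CC.str (p a)
  p_right_act : ∀ (a : A) (h : H),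
    p (AB.mul a (i ((HB.str ^ (-m)) h))) = HB.counit h • CC.str (p a)
  sigma_mod : ∃ σbar : H →ₗ[K] H →ₗ[K] A,
    IsLeftSigmaHomModule HB AB.mul AB.str.toLinearMap σbar
        (AB.mul ∘ₗ i ∘ₗ (HB.str ^ (-m)).toLinearMap)
      ∧ IsRightSigmaHomModule HB AB.mul AB.str.toLinearMap σbar
        (AB.mul.compl₂ (i ∘ₗ (HB.str ^ (-m)).toLinearMap))
  sub_l : ∀ c : C, ∃ y : H ⊗[K] C,
    TensorProduct.map ((HB.str ^ (-m)).toLinearMap ∘ₗ π) (LinearMap.id : A →ₗ[K] A)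
        (AB.comul (j c))
      = TensorProduct.map (LinearMap.id : H →ₗ[K] H) j y
  sub_r : ∀ c : C, ∃ z : C ⊗[K] H,
    TensorProduct.map (LinearMap.id : A →ₗ[K] A) ((HB.str ^ (-m)).toLinearMap ∘ₗ π)
        (AB.comul (j c))
      = TensorProduct.map j (LinearMap.id : H →ₗ[K] H) z
  p_col : ∀ c : C,
    TensorProduct.map (LinearMap.id : H →ₗ[K] H) p
        (TensorProduct.map ((HB.str ^ (-m)).toLinearMap ∘ₗ π) (LinearMap.id : A →ₗ[K] A)
          (AB.comul (j c)))
      = coact c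
  p_cor : ∀ c : C,
    TensorProduct.map p (LinearMap.id : H →ₗ[K] H)
        (TensorProduct.map (LinearMap.id : A →ₗ[K] A) ((HB.str ^ (-m)).toLinearMap ∘ₗ π)
          (AB.comul (j c)))
      = CC.str.symm c ⊗ₜ[K] HB.one
  split : ∀ a : A,
    TensorProduct.lift AB.mul (TensorProduct.map (j ∘ₗ p) (i ∘ₗ π) (AB.comul a)) = a

/-- The map `f : C ♯ H → A`, `c ⊗ h ↦ γ⁻¹(j(c)i(h))`. -/
def admF (AB : HomBialgebraStr K A) (j : C →ₗ[K] A) (i : H →ₗ[K] A) :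
    C ⊗[K] H →ₗ[K] A :=
  AB.str.symm.toLinearMap ∘ₗ TensorProduct.lift ((AB.mul ∘ₗ j).compl₂ i)

/-- The map `g : A → C ♯ H`, `a ↦ β(p(a₁)) ⊗ α(π(a₂))`. -/
def admG (HB : HomBialgebraStr K H) (CC : HomCoalgebraStr K C)
    (AB : HomBialgebraStr K A) (p : A →ₗ[K] C) (π : A →ₗ[K] H) :
    A →ₗ[K] C ⊗[K] H :=
  TensorProduct.map (CC.str.toLinearMap ∘ₗ p) (HB.str.toLinearMap ∘ₗ π) ∘ₗ AB.comul

end Defs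

/-!
As a composite of linear maps, `Δ = (id ⊗ T ⊗ id) ∘ (Δ_A ⊗ Δ_H)`, where
`T (a ⊗ h) = α^m(a₍₋₁₎) α⁻¹(h) ⊗ β(a₍₀₎)` moves `H` to the left of `A`. Such a `Δ` is
Hom-coassociative and counital as soon as `T` is a distributive law, i.e. compatible with the
structure maps, the comultiplications and the counits of `A` and `H`: both iterated
comultiplications of `a ⋊ h` then move the three copies of `H` past the three copies of `A` by the
same crossings, starting from the two sides of the coassociativity laws of `A` and `H`. For the `T`
above, compatibility with `Δ_A` is Hom-associativity of `H` together with the comodule coalgebra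
axiom, and compatibility with `Δ_H` is coassociativity of the coaction together with
multiplicativity of `Δ_H`. All that matters of `α^m` is that it is a bialgebra endomorphism.
-/

section Crossing

variable {R M₁ M₂ N₁ N₂ M' N' : Type*} [CommSemiring R]
variable [AddCommMonoid M₁] [Module R M₁] [AddCommMonoid M₂] [Module R M₂]
variable [AddCommMonoid N₁] [Module R N₁] [AddCommMonoid N₂] [Module R N₂]
variable [AddCommMonoid M'] [Module R M'] [AddCommMonoid N'] [Module R N']

/-- The map `id ⊗ T ⊗ id`, applying a crossing `T` to the two middle factors of
`(M₁ ⊗ M₂) ⊗ (N₁ ⊗ N₂)`. -/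
def mapMiddle (T : M₂ ⊗[R] N₁ →ₗ[R] N' ⊗[R] M') :
    (M₁ ⊗[R] M₂) ⊗[R] (N₁ ⊗[R] N₂) →ₗ[R] (M₁ ⊗[R] N') ⊗[R] (M' ⊗[R] N₂) :=
  (TensorProduct.assoc R M₁ N' (M' ⊗[R] N₂)).symm.toLinearMap ∘ₗ
    LinearMap.lTensor M₁ ((TensorProduct.assoc R N' M' N₂).toLinearMap ∘ₗ
      LinearMap.rTensor N₂ T ∘ₗ (TensorProduct.assoc R M₂ N₁ N₂).symm.toLinearMap) ∘ₗ
    (TensorProduct.assoc R M₁ M₂ (N₁ ⊗[R] N₂)).toLinearMap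

theorem mapMiddle_tmul (T : M₂ ⊗[R] N₁ →ₗ[R] N' ⊗[R] M') (a : M₁) (b : M₂) (c : N₁) (d : N₂) :
    mapMiddle T ((a ⊗ₜ[R] b) ⊗ₜ[R] (c ⊗ₜ[R] d)) =
      TensorProduct.map (TensorProduct.mk R M₁ N' a) ((TensorProduct.mk R M' N₂).flip d)
        (T (b ⊗ₜ[R] c)) := by
  simp only [mapMiddle, LinearMap.comp_apply, LinearEquiv.coe_coe, TensorProduct.assoc_tmul,
    LinearMap.lTensor_tmul, TensorProduct.assoc_symm_tmul, LinearMap.rTensor_tmul]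
  induction T (b ⊗ₜ[R] c) with
  | zero => simp
  | add x y hx hy => simp only [TensorProduct.add_tmul, TensorProduct.tmul_add, map_add, hx, hy]
  | tmul x y => simp

variable {P₁ P₂ Q₁ Q₂ P' Q' : Type*}
variable [AddCommMonoid P₁] [Module R P₁] [AddCommMonoid P₂] [Module R P₂]
variable [AddCommMonoid Q₁] [Module R Q₁] [AddCommMonoid Q₂] [Module R Q₂]
variable [AddCommMonoid P'] [Module R P'] [AddCommMonoid Q'] [Module R Q']

theorem map_map_mapMiddle {T : M₂ ⊗[R] N₁ →ₗ[R] N' ⊗[R] M'} {S : P₂ ⊗[R] Q₁ →ₗ[R] Q' ⊗[R] P'}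
    {f₂ : M₂ →ₗ[R] P₂} {g₁ : N₁ →ₗ[R] Q₁} {f' : M' →ₗ[R] P'} {g' : N' →ₗ[R] Q'}
    (hTS : TensorProduct.map g' f' ∘ₗ T = S ∘ₗ TensorProduct.map f₂ g₁)
    (f₁ : M₁ →ₗ[R] P₁) (g₂ : N₂ →ₗ[R] Q₂) (z : (M₁ ⊗[R] M₂) ⊗[R] (N₁ ⊗[R] N₂)) :
    TensorProduct.map (TensorProduct.map f₁ g') (TensorProduct.map f' g₂) (mapMiddle T z) =
      mapMiddle S (TensorProduct.map (TensorProduct.map f₁ f₂) (TensorProduct.map g₁ g₂) z) := by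
  refine LinearMap.congr_fun
    (f := TensorProduct.map (TensorProduct.map f₁ g') (TensorProduct.map f' g₂) ∘ₗ mapMiddle T)
    (g := mapMiddle S ∘ₗ
      TensorProduct.map (TensorProduct.map f₁ f₂) (TensorProduct.map g₁ g₂)) ?_ z
  ext a b c d
  have hbc : S (f₂ b ⊗ₜ[R] g₁ c) = TensorProduct.map g' f' (T (b ⊗ₜ[R] c)) :=
    (LinearMap.congr_fun hTS (b ⊗ₜ[R] c)).symm
  change TensorProduct.map _ _ (mapMiddle T ((a ⊗ₜ b) ⊗ₜ (c ⊗ₜ d))) =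
    mapMiddle S ((f₁ a ⊗ₜ f₂ b) ⊗ₜ (g₁ c ⊗ₜ g₂ d))
  rw [mapMiddle_tmul, mapMiddle_tmul, hbc, TensorProduct.map_map, TensorProduct.map_map]
  rfl

end Crossing

section IteratedCrossing

variable {R M N : Type*} [CommSemiring R] [AddCommMonoid M] [Module R M]
variable [AddCommMonoid N] [Module R N]

/-- The crossing of `M ⊗ M` with `N` obtained by moving `N` past one copy of `M` at a time. -/
def crossLeft (T : M ⊗[R] N →ₗ[R] N ⊗[R] M) : (M ⊗[R] M) ⊗[R] N →ₗ[R] N ⊗[R] (M ⊗[R] M) :=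
  (TensorProduct.assoc R N M M).toLinearMap ∘ₗ LinearMap.rTensor M T ∘ₗ
    (TensorProduct.assoc R M N M).symm.toLinearMap ∘ₗ LinearMap.lTensor M T ∘ₗ
    (TensorProduct.assoc R M M N).toLinearMap

/-- The crossing of `M` with `N ⊗ N` obtained by moving `M` past one copy of `N` at a time. -/
def crossRight (T : M ⊗[R] N →ₗ[R] N ⊗[R] M) : M ⊗[R] (N ⊗[R] N) →ₗ[R] (N ⊗[R] N) ⊗[R] M :=
  (TensorProduct.assoc R N N M).symm.toLinearMap ∘ₗ LinearMap.lTensor N T ∘ₗ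
    (TensorProduct.assoc R N M N).toLinearMap ∘ₗ LinearMap.rTensor N T ∘ₗ
    (TensorProduct.assoc R M N N).symm.toLinearMap

/-- The regrouping `(v ⊗ y) ⊗ (w ⊗ x) ↦ (a ⊗ v) ⊗ ((y ⊗ w) ⊗ (x ⊗ f))`: the common shape of the
two iterated crossings once the outer factors `a` and `f` are fixed. -/
def encloseCrossings (a : M) (f : N) :
    (N ⊗[R] M) ⊗[R] (N ⊗[R] M) →ₗ[R] (M ⊗[R] N) ⊗[R] ((M ⊗[R] N) ⊗[R] (M ⊗[R] N)) :=
  TensorProduct.map (TensorProduct.mk R M N a)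
      (LinearMap.lTensor (M ⊗[R] N) ((TensorProduct.mk R M N).flip f) ∘ₗ
        (TensorProduct.assoc R M N M).symm.toLinearMap) ∘ₗ
    (TensorProduct.assoc R N M (N ⊗[R] M)).toLinearMap

theorem map_mapMiddle_eq_encloseCrossings_right (T : M ⊗[R] N →ₗ[R] N ⊗[R] M) (a b : M) (u f : N)
    (t : N ⊗[R] M) :
    TensorProduct.assoc R (M ⊗[R] N) (M ⊗[R] N) (M ⊗[R] N)
        (TensorProduct.map (mapMiddle T) LinearMap.id
          (TensorProduct.map (TensorProduct.mk R (M ⊗[R] M) (N ⊗[R] N) (a ⊗ₜ[R] b))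
            ((TensorProduct.mk R M N).flip f) ((TensorProduct.assoc R N N M).symm (u ⊗ₜ[R] t)))) =
      encloseCrossings a f (T (b ⊗ₜ[R] u) ⊗ₜ[R] t) := by
  induction t with
  | zero => simp
  | add x y hx hy => simp only [TensorProduct.tmul_add, map_add, hx, hy]
  | tmul w x =>
    simp only [TensorProduct.assoc_symm_tmul, TensorProduct.map_tmul, TensorProduct.mk_apply,
      LinearMap.flip_apply, mapMiddle_tmul, LinearMap.id_apply]
    induction T (b ⊗ₜ[R] u) with
    | zero => simp
    | add x y hx hy => simp only [TensorProduct.add_tmul, map_add, hx, hy]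
    | tmul v y => rfl

theorem map_mapMiddle_eq_encloseCrossings_left (T : M ⊗[R] N →ₗ[R] N ⊗[R] M) (a z : M) (e f : N)
    (s : N ⊗[R] M) :
    TensorProduct.map LinearMap.id (mapMiddle T)
        (TensorProduct.map (TensorProduct.mk R M N a)
          ((TensorProduct.mk R (M ⊗[R] M) (N ⊗[R] N)).flip (e ⊗ₜ[R] f))
          (TensorProduct.assoc R N M M (s ⊗ₜ[R] z))) =
      encloseCrossings a f (s ⊗ₜ[R] T (z ⊗ₜ[R] e)) := by
  induction s with
  | zero => simp
  | add x y hx hy => simp only [TensorProduct.add_tmul, map_add, hx, hy]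
  | tmul v y =>
    simp only [TensorProduct.assoc_tmul, TensorProduct.map_tmul, TensorProduct.mk_apply,
      LinearMap.flip_apply, mapMiddle_tmul, LinearMap.id_apply]
    induction T (z ⊗ₜ[R] e) with
    | zero => simp
    | add x y hx hy => simp only [TensorProduct.tmul_add, map_add, hx, hy]
    | tmul w x => rfl

theorem assoc_mapMiddle_crossRight (T : M ⊗[R] N →ₗ[R] N ⊗[R] M) :
    (TensorProduct.assoc R (M ⊗[R] N) (M ⊗[R] N) (M ⊗[R] N)).toLinearMap ∘ₗ
        TensorProduct.map (mapMiddle T) LinearMap.id ∘ₗ mapMiddle (crossRight T) =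
      TensorProduct.map LinearMap.id (mapMiddle T) ∘ₗ mapMiddle (crossLeft T) ∘ₗ
        TensorProduct.map (TensorProduct.assoc R M M M).toLinearMap
          (TensorProduct.assoc R N N N).toLinearMap := by
  ext a b c d e f
  simp only [TensorProduct.AlgebraTensorModule.curry_apply, TensorProduct.curry_apply,
    LinearMap.restrictScalars_self, LinearMap.comp_apply, LinearEquiv.coe_coe,
    TensorProduct.map_tmul, TensorProduct.assoc_tmul, mapMiddle_tmul, crossLeft, crossRight,
    TensorProduct.assoc_symm_tmul, LinearMap.lTensor_tmul, LinearMap.rTensor_tmul]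
  induction T (c ⊗ₜ[R] d) with
  | zero => simp
  | add x y hx hy => simp only [TensorProduct.add_tmul, TensorProduct.tmul_add, map_add, hx, hy]
  | tmul u z =>
    simp only [TensorProduct.assoc_tmul, TensorProduct.assoc_symm_tmul, LinearMap.lTensor_tmul,
      LinearMap.rTensor_tmul]
    rw [map_mapMiddle_eq_encloseCrossings_right, map_mapMiddle_eq_encloseCrossings_left]

end IteratedCrossing

section CounitCrossing

variable {R M N : Type*} [CommSemiring R] [AddCommMonoid M] [Module R M]
variable [AddCommMonoid N] [Module R N]

theorem lid_mapMiddle_comm (z : (R ⊗[R] M) ⊗[R] (R ⊗[R] N)) :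
    TensorProduct.lid R (M ⊗[R] N)
        (TensorProduct.map (LinearMap.mul' R R) LinearMap.id
          (mapMiddle (TensorProduct.comm R M R).toLinearMap z)) =
      TensorProduct.map (TensorProduct.lid R M).toLinearMap (TensorProduct.lid R N).toLinearMap
        z := by
  refine LinearMap.congr_fun
    (f := (TensorProduct.lid R (M ⊗[R] N)).toLinearMap ∘ₗ
      TensorProduct.map (LinearMap.mul' R R) LinearMap.id ∘ₗ
        mapMiddle (TensorProduct.comm R M R).toLinearMap) ?_ z
  ext a b
  simp [mapMiddle_tmul]

theorem rid_mapMiddle_comm (z : (M ⊗[R] R) ⊗[R] (N ⊗[R] R)) :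
    TensorProduct.rid R (M ⊗[R] N)
        (TensorProduct.map LinearMap.id (LinearMap.mul' R R)
          (mapMiddle (TensorProduct.comm R R N).toLinearMap z)) =
      TensorProduct.map (TensorProduct.rid R M).toLinearMap (TensorProduct.rid R N).toLinearMap
        z := by
  refine LinearMap.congr_fun
    (f := (TensorProduct.rid R (M ⊗[R] N)).toLinearMap ∘ₗ
      TensorProduct.map LinearMap.id (LinearMap.mul' R R) ∘ₗ
        mapMiddle (TensorProduct.comm R R N).toLinearMap) ?_ z
  ext a b
  simp [mapMiddle_tmul]

end CounitCrossing

section DistributiveLaw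

variable {K C D : Type*} [Field K] [AddCommGroup C] [Module K C] [AddCommGroup D] [Module K D]

/-- A distributive law between two monoidal Hom-coalgebras: a crossing `T : C ⊗ D → D ⊗ C`
compatible with structure maps, comultiplications and counits, which makes `C ⊗ D` a
Hom-coalgebra. The inverse structure maps in the comultiplication laws are those of
Hom-coassociativity. -/
structure IsHomDistributiveLaw (CC : HomCoalgebraStr K C) (DD : HomCoalgebraStr K D)
    (T : C ⊗[K] D →ₗ[K] D ⊗[K] C) : Prop where
  map_str : TensorProduct.map DD.str.toLinearMap CC.str.toLinearMap ∘ₗ T =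
    T ∘ₗ TensorProduct.map CC.str.toLinearMap DD.str.toLinearMap
  comul_left : TensorProduct.map DD.str.symm.toLinearMap CC.comul ∘ₗ T =
    crossLeft T ∘ₗ TensorProduct.map CC.comul DD.str.symm.toLinearMap
  comul_right : TensorProduct.map DD.comul CC.str.symm.toLinearMap ∘ₗ T =
    crossRight T ∘ₗ TensorProduct.map CC.str.symm.toLinearMap DD.comul
  counit_left : TensorProduct.map LinearMap.id CC.counit ∘ₗ T =
    (TensorProduct.comm K K D).toLinearMap ∘ₗ TensorProduct.map CC.counit LinearMap.id
  counit_right : TensorProduct.map DD.counit LinearMap.id ∘ₗ T =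
    (TensorProduct.comm K C K).toLinearMap ∘ₗ TensorProduct.map LinearMap.id DD.counit

namespace IsHomDistributiveLaw

variable {CC : HomCoalgebraStr K C} {DD : HomCoalgebraStr K D} {T : C ⊗[K] D →ₗ[K] D ⊗[K] C}

theorem hom_coassoc (hT : IsHomDistributiveLaw CC DD T) (c : C) (d : D) :
    TensorProduct.map (TensorProduct.map CC.str.symm.toLinearMap DD.str.symm.toLinearMap)
        (mapMiddle T ∘ₗ TensorProduct.map CC.comul DD.comul)
        (mapMiddle T (CC.comul c ⊗ₜ[K] DD.comul d)) =
      TensorProduct.assoc K _ _ _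
        (TensorProduct.map (mapMiddle T ∘ₗ TensorProduct.map CC.comul DD.comul)
          (TensorProduct.map CC.str.symm.toLinearMap DD.str.symm.toLinearMap)
          (mapMiddle T (CC.comul c ⊗ₜ[K] DD.comul d))) := by
  set γ := TensorProduct.map CC.str.symm.toLinearMap DD.str.symm.toLinearMap
  set z := mapMiddle T (CC.comul c ⊗ₜ[K] DD.comul d)
  calc
    _ = TensorProduct.map LinearMap.id (mapMiddle T)
          (TensorProduct.map γ (TensorProduct.map CC.comul DD.comul) z) := by
      rw [TensorProduct.map_map, LinearMap.id_comp]
    _ = TensorProduct.map LinearMap.id (mapMiddle T) (mapMiddle (crossLeft T)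
          (TensorProduct.map CC.str.symm.toLinearMap CC.comul (CC.comul c) ⊗ₜ[K]
            TensorProduct.map DD.str.symm.toLinearMap DD.comul (DD.comul d))) := by
      rw [map_map_mapMiddle hT.comul_left, TensorProduct.map_tmul]
    _ = TensorProduct.map LinearMap.id (mapMiddle T) (mapMiddle (crossLeft T)
          (TensorProduct.assoc K C C C
              (TensorProduct.map CC.comul CC.str.symm.toLinearMap (CC.comul c)) ⊗ₜ[K]
            TensorProduct.assoc K D D D
              (TensorProduct.map DD.comul DD.str.symm.toLinearMap (DD.comul d)))) := by
      rw [CC.hom_coassoc, DD.hom_coassoc]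
    _ = TensorProduct.assoc K _ _ _ (TensorProduct.map (mapMiddle T) LinearMap.id
          (mapMiddle (crossRight T)
            (TensorProduct.map CC.comul CC.str.symm.toLinearMap (CC.comul c) ⊗ₜ[K]
              TensorProduct.map DD.comul DD.str.symm.toLinearMap (DD.comul d)))) :=
      (LinearMap.congr_fun (assoc_mapMiddle_crossRight T) (_ ⊗ₜ[K] _)).symm
    _ = TensorProduct.assoc K _ _ _ (TensorProduct.map (mapMiddle T) LinearMap.id
          (TensorProduct.map (TensorProduct.map CC.comul DD.comul) γ z)) := by
      rw [map_map_mapMiddle hT.comul_right, TensorProduct.map_tmul]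
    _ = _ := by rw [TensorProduct.map_map, LinearMap.id_comp]

theorem comul_str (hT : IsHomDistributiveLaw CC DD T) (c : C) (d : D) :
    mapMiddle T (CC.comul (CC.str c) ⊗ₜ[K] DD.comul (DD.str d)) =
      TensorProduct.map (TensorProduct.map CC.str.toLinearMap DD.str.toLinearMap)
        (TensorProduct.map CC.str.toLinearMap DD.str.toLinearMap)
        (mapMiddle T (CC.comul c ⊗ₜ[K] DD.comul d)) := by
  rw [map_map_mapMiddle hT.map_str, TensorProduct.map_tmul, CC.comul_str, DD.comul_str]

theorem counit_comul_left (hT : IsHomDistributiveLaw CC DD T) (c : C) (d : D) :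
    TensorProduct.lid K (C ⊗[K] D)
        (TensorProduct.map (LinearMap.mul' K K ∘ₗ TensorProduct.map CC.counit DD.counit)
          LinearMap.id (mapMiddle T (CC.comul c ⊗ₜ[K] DD.comul d))) =
      CC.str.symm c ⊗ₜ[K] DD.str.symm d := by
  have hsplit : TensorProduct.map (LinearMap.mul' K K ∘ₗ TensorProduct.map CC.counit DD.counit)
      (LinearMap.id : C ⊗[K] D →ₗ[K] C ⊗[K] D) =
      TensorProduct.map (LinearMap.mul' K K) LinearMap.id ∘ₗ
        TensorProduct.map (TensorProduct.map CC.counit DD.counit)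
          (TensorProduct.map LinearMap.id LinearMap.id) := by
    rw [← TensorProduct.map_comp, TensorProduct.map_id, LinearMap.id_comp]
  rw [hsplit, LinearMap.comp_apply, map_map_mapMiddle hT.counit_right, lid_mapMiddle_comm,
    TensorProduct.map_tmul, TensorProduct.map_tmul, LinearEquiv.coe_coe, LinearEquiv.coe_coe,
    CC.counit_comul_left, DD.counit_comul_left]

theorem counit_comul_right (hT : IsHomDistributiveLaw CC DD T) (c : C) (d : D) :
    TensorProduct.rid K (C ⊗[K] D)
        (TensorProduct.map LinearMap.id
          (LinearMap.mul' K K ∘ₗ TensorProduct.map CC.counit DD.counit)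
          (mapMiddle T (CC.comul c ⊗ₜ[K] DD.comul d))) =
      CC.str.symm c ⊗ₜ[K] DD.str.symm d := by
  have hsplit : TensorProduct.map (LinearMap.id : C ⊗[K] D →ₗ[K] C ⊗[K] D)
      (LinearMap.mul' K K ∘ₗ TensorProduct.map CC.counit DD.counit) =
      TensorProduct.map LinearMap.id (LinearMap.mul' K K) ∘ₗ
        TensorProduct.map (TensorProduct.map LinearMap.id LinearMap.id)
          (TensorProduct.map CC.counit DD.counit) := by
    rw [← TensorProduct.map_comp, TensorProduct.map_id, LinearMap.id_comp]
  rw [hsplit, LinearMap.comp_apply, map_map_mapMiddle hT.counit_left, rid_mapMiddle_comm,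
    TensorProduct.map_tmul, TensorProduct.map_tmul, LinearEquiv.coe_coe, LinearEquiv.coe_coe,
    CC.counit_comul_right, DD.counit_comul_right]

/-- The twisted tensor coproduct of two monoidal Hom-coalgebras along a distributive law `T`:
the space `C ⊗ D` with comultiplication `(id ⊗ T ⊗ id) ∘ (Δ_C ⊗ Δ_D)` and counit `ε_C ⊗ ε_D`. -/
def tensorHomCoalgebra (hT : IsHomDistributiveLaw CC DD T) : HomCoalgebraStr K (C ⊗[K] D) where
  comul := mapMiddle T ∘ₗ TensorProduct.map CC.comul DD.comul
  counit := LinearMap.mul' K K ∘ₗ TensorProduct.map CC.counit DD.counit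
  str := TensorProduct.congr CC.str DD.str
  hom_coassoc := LinearMap.congr_fun (f := TensorProduct.map _ _ ∘ₗ _)
    (g := (TensorProduct.assoc K _ _ _).toLinearMap ∘ₗ TensorProduct.map _ _ ∘ₗ _)
    (TensorProduct.ext' hT.hom_coassoc)
  comul_str := LinearMap.congr_fun
    (f := (mapMiddle T ∘ₗ TensorProduct.map CC.comul DD.comul) ∘ₗ
      (TensorProduct.congr CC.str DD.str).toLinearMap)
    (g := TensorProduct.map (TensorProduct.congr CC.str DD.str).toLinearMap
        (TensorProduct.congr CC.str DD.str).toLinearMap ∘ₗ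
      mapMiddle T ∘ₗ TensorProduct.map CC.comul DD.comul)
    (TensorProduct.ext' hT.comul_str)
  counit_comul_left := LinearMap.congr_fun
    (f := (TensorProduct.lid K (C ⊗[K] D)).toLinearMap ∘ₗ TensorProduct.map _ LinearMap.id ∘ₗ _)
    (g := (TensorProduct.congr CC.str DD.str).symm.toLinearMap)
    (TensorProduct.ext' hT.counit_comul_left)
  counit_comul_right := LinearMap.congr_fun
    (f := (TensorProduct.rid K (C ⊗[K] D)).toLinearMap ∘ₗ TensorProduct.map LinearMap.id _ ∘ₗ _)
    (g := (TensorProduct.congr CC.str DD.str).symm.toLinearMap)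
    (TensorProduct.ext' hT.counit_comul_right)
  counit_str := LinearMap.congr_fun
    (f := (LinearMap.mul' K K ∘ₗ TensorProduct.map CC.counit DD.counit) ∘ₗ
      (TensorProduct.congr CC.str DD.str).toLinearMap)
    (TensorProduct.ext' fun c d => by simp [CC.counit_str, DD.counit_str])

end IsHomDistributiveLaw

end DistributiveLaw

section HomBialgebra

variable {K H : Type*} [Field K] [AddCommGroup H] [Module K H]

/-- The monoidal Hom-coalgebra underlying a monoidal Hom-bialgebra. -/
def HomBialgebraStr.toHomCoalgebraStr (HB : HomBialgebraStr K H) : HomCoalgebraStr K H :=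
  { HB with }

theorem tensorSquareMul_tmul (mul : H →ₗ[K] H →ₗ[K] H) (a b c d : H) :
    tensorSquareMul mul (a ⊗ₜ[K] b) (c ⊗ₜ[K] d) = mul a c ⊗ₜ[K] mul b d := rfl

/-- A Hom-bialgebra endomorphism: a linear map preserving products, the unit, coproducts and the
counit. Commutation with the structure map follows, see `IsHomBialgebraEnd.map_str`. -/
structure IsHomBialgebraEnd (HB : HomBialgebraStr K H) (φ : H →ₗ[K] H) : Prop where
  map_mul : ∀ a b : H, φ (HB.mul a b) = HB.mul (φ a) (φ b)
  map_one : φ HB.one = HB.one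
  map_comul : ∀ a : H, HB.comul (φ a) = TensorProduct.map φ φ (HB.comul a)
  map_counit : ∀ a : H, HB.counit (φ a) = HB.counit a

theorem IsHomBialgebraEnd.map_str {HB : HomBialgebraStr K H} {φ : H →ₗ[K] H}
    (hφ : IsHomBialgebraEnd HB φ) (a : H) : φ (HB.str a) = HB.str (φ a) := by
  rw [← HB.mul_one, hφ.map_mul, hφ.map_one, HB.mul_one]

/-- The group of Hom-bialgebra automorphisms, used to see that all integral powers of the
structure map are automorphisms. -/
def homBialgebraAut (HB : HomBialgebraStr K H) : Subgroup (H ≃ₗ[K] H) where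
  carrier := {φ | IsHomBialgebraEnd HB φ.toLinearMap}
  one_mem' :=
    { map_mul := fun _ _ => rfl
      map_one := rfl
      map_comul := fun a => (LinearMap.congr_fun TensorProduct.map_id (HB.comul a)).symm
      map_counit := fun _ => rfl }
  mul_mem' {φ ψ} hφ hψ :=
    { map_mul := fun a b => (congrArg φ (hψ.map_mul a b)).trans (hφ.map_mul _ _)
      map_one := (congrArg φ hψ.map_one).trans hφ.map_one
      map_comul := fun a => by
        have hmap : TensorProduct.map (φ * ψ).toLinearMap (φ * ψ).toLinearMap =
            TensorProduct.map φ.toLinearMap φ.toLinearMap ∘ₗ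
              TensorProduct.map ψ.toLinearMap ψ.toLinearMap :=
          TensorProduct.map_comp _ _ _ _
        rw [hmap, LinearMap.comp_apply, ← hψ.map_comul, ← hφ.map_comul]
        rfl
      map_counit := fun a => (hφ.map_counit _).trans (hψ.map_counit a) }
  inv_mem' {φ} hφ :=
    { map_mul := fun a b => φ.injective <| by
        simpa using (hφ.map_mul (φ.symm a) (φ.symm b)).symm
      map_one := φ.symm_apply_eq.mpr hφ.map_one.symm
      map_comul := fun a => (TensorProduct.congr φ φ).eq_symm_apply.mpr <|
        (hφ.map_comul (φ.symm a)).symm.trans (congrArg HB.comul (φ.apply_symm_apply a))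
      map_counit := fun a => by simpa using (hφ.map_counit (φ.symm a)).symm }

theorem str_mem_homBialgebraAut (HB : HomBialgebraStr K H) : HB.str ∈ homBialgebraAut HB :=
  ⟨HB.str_mul, HB.str_one, HB.comul_str, HB.counit_str⟩

theorem isHomBialgebraEnd_str_symm (HB : HomBialgebraStr K H) :
    IsHomBialgebraEnd HB HB.str.symm.toLinearMap :=
  inv_mem (str_mem_homBialgebraAut HB)

end HomBialgebra

section SmashLaw

variable {K H A : Type*} [Field K] [AddCommGroup H] [Module K H] [AddCommGroup A] [Module K A]

theorem IsComoduleCoalgebra.coact_str_symm {HB : HomBialgebraStr K H} {AC : HomCoalgebraStr K A}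
    {coact : A →ₗ[K] H ⊗[K] A} (hcc : IsComoduleCoalgebra HB AC coact) (a : A) :
    coact (AC.str.symm a) =
      TensorProduct.map HB.str.symm.toLinearMap AC.str.symm.toLinearMap (coact a) :=
  (TensorProduct.congr HB.str AC.str).eq_symm_apply.mpr <|
    (hcc.coact_str (AC.str.symm a)).symm.trans (congrArg coact (AC.str.apply_symm_apply a))

/-- The crossing `a ⊗ h ↦ φ(a₍₋₁₎)α⁻¹(h) ⊗ β(a₍₀₎)` underlying the Hom-smash coproduct, which
corresponds to `φ = α^m`. -/
def smashLaw (HB : HomBialgebraStr K H) (AC : HomCoalgebraStr K A) (coact : A →ₗ[K] H ⊗[K] A)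
    (φ : H →ₗ[K] H) : A ⊗[K] H →ₗ[K] H ⊗[K] A :=
  TensorProduct.map (TensorProduct.lift HB.mul ∘ₗ TensorProduct.map φ HB.str.symm.toLinearMap)
      AC.str.toLinearMap ∘ₗ
    (TensorProduct.rightComm K H A H).toLinearMap ∘ₗ LinearMap.rTensor H coact

variable (HB : HomBialgebraStr K H) (AC : HomCoalgebraStr K A) (coact : A →ₗ[K] H ⊗[K] A)
variable (φ : H →ₗ[K] H)

theorem smashLaw_tmul (a : A) (h : H) :
    smashLaw HB AC coact φ (a ⊗ₜ[K] h) =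
      TensorProduct.map (HB.mul.flip (HB.str.symm h) ∘ₗ φ) AC.str.toLinearMap (coact a) := by
  simp only [smashLaw, LinearMap.comp_apply, LinearMap.rTensor_tmul, LinearEquiv.coe_coe]
  induction coact a with
  | zero => simp
  | add x y hx hy => simp only [TensorProduct.add_tmul, map_add, hx, hy]
  | tmul x v => simp

theorem scComulElem_eq_mapMiddle_smashLaw (m : ℤ) (a : A) (h : H) :
    scComulElem HB AC coact m a h =
      mapMiddle (smashLaw HB AC coact (HB.str ^ m).toLinearMap)
        (AC.comul a ⊗ₜ[K] HB.comul h) := by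
  have hinv : HB.str ^ (-1 : ℤ) = HB.str.symm := zpow_neg_one HB.str
  rw [scComulElem, hinv]
  induction HB.comul h with
  | zero => simp
  | add s t hs ht => simp only [TensorProduct.tmul_add, map_add, hs, ht]
  | tmul g k =>
    induction AC.comul a with
    | zero => simp
    | add s t hs ht => simp only [TensorProduct.add_tmul, map_add, hs, ht]
    | tmul b c =>
      rw [mapMiddle_tmul, smashLaw_tmul, TensorProduct.map_tmul]
      induction coact c with
      | zero => simp
      | add s t hs ht => simp only [TensorProduct.add_tmul, TensorProduct.tmul_add, map_add, hs, ht]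
      | tmul x v => simp

variable {HB AC coact φ}

theorem map_str_smashLaw (hcc : IsComoduleCoalgebra HB AC coact) (hφ : IsHomBialgebraEnd HB φ) :
    TensorProduct.map HB.str.toLinearMap AC.str.toLinearMap ∘ₗ smashLaw HB AC coact φ =
      smashLaw HB AC coact φ ∘ₗ TensorProduct.map AC.str.toLinearMap HB.str.toLinearMap := by
  refine TensorProduct.ext' fun a h => ?_
  simp only [LinearMap.comp_apply, TensorProduct.map_tmul, LinearEquiv.coe_coe, smashLaw_tmul,
    hcc.coact_str, TensorProduct.map_map]
  congr 2
  ext x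
  simp [HB.str_mul, hφ.map_str]

theorem str_symm_mul_map_mul (hφ : IsHomBialgebraEnd HB φ) (x y h : H) :
    HB.str.symm (HB.mul (φ (HB.mul x y)) (HB.str.symm h)) =
      HB.mul (φ x) (HB.str.symm (HB.mul (φ y) (HB.str.symm (HB.str.symm h)))) := by
  rw [LinearEquiv.symm_apply_eq, HB.str_mul, LinearEquiv.apply_symm_apply, HB.hom_assoc,
    LinearEquiv.apply_symm_apply, hφ.map_mul]

theorem crossLeft_smashLaw_tmul (hφ : IsHomBialgebraEnd HB φ) (b c : A) (h : H) :
    crossLeft (smashLaw HB AC coact φ) ((b ⊗ₜ[K] c) ⊗ₜ[K] HB.str.symm h) =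
      TensorProduct.map
        ((HB.str.symm.toLinearMap ∘ₗ HB.mul.flip (HB.str.symm h) ∘ₗ φ) ∘ₗ
          TensorProduct.lift HB.mul)
        (TensorProduct.map AC.str.toLinearMap AC.str.toLinearMap)
        (TensorProduct.tensorTensorTensorComm K H A H A (coact b ⊗ₜ[K] coact c)) := by
  simp only [crossLeft, LinearMap.comp_apply, LinearEquiv.coe_coe, TensorProduct.assoc_tmul,
    LinearMap.lTensor_tmul, smashLaw_tmul]
  induction coact c with
  | zero => simp
  | add s t hs ht => simp only [TensorProduct.tmul_add, map_add, hs, ht]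
  | tmul y w =>
    simp only [TensorProduct.map_tmul, TensorProduct.assoc_symm_tmul, LinearMap.rTensor_tmul,
      smashLaw_tmul]
    induction coact b with
    | zero => simp
    | add s t hs ht => simp only [TensorProduct.add_tmul, map_add, hs, ht]
    | tmul x v => simp [str_symm_mul_map_mul hφ]

theorem comul_smashLaw_left (hcc : IsComoduleCoalgebra HB AC coact)
    (hφ : IsHomBialgebraEnd HB φ) :
    TensorProduct.map HB.str.symm.toLinearMap AC.comul ∘ₗ smashLaw HB AC coact φ =
      crossLeft (smashLaw HB AC coact φ) ∘ₗ
        TensorProduct.map AC.comul HB.str.symm.toLinearMap := by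
  refine TensorProduct.ext' fun a h => ?_
  have hcomul_str : AC.comul ∘ₗ AC.str.toLinearMap =
      TensorProduct.map AC.str.toLinearMap AC.str.toLinearMap ∘ₗ AC.comul :=
    LinearMap.ext AC.comul_str
  set ψ := HB.str.symm.toLinearMap ∘ₗ HB.mul.flip (HB.str.symm h) ∘ₗ φ
  set ββ := TensorProduct.map AC.str.toLinearMap AC.str.toLinearMap
  calc
    _ = TensorProduct.map ψ (AC.comul ∘ₗ AC.str.toLinearMap) (coact a) := by
      rw [LinearMap.comp_apply, smashLaw_tmul, TensorProduct.map_map]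
    _ = TensorProduct.map ψ ββ (TensorProduct.map LinearMap.id AC.comul (coact a)) := by
      rw [hcomul_str, TensorProduct.map_map, LinearMap.comp_id]
    _ = TensorProduct.map (ψ ∘ₗ TensorProduct.lift HB.mul) ββ
          (TensorProduct.tensorTensorTensorComm K H A H A
            (TensorProduct.map coact coact (AC.comul a))) := by
      rw [hcc.coact_comul, TensorProduct.map_map, LinearMap.comp_id]
    _ = crossLeft (smashLaw HB AC coact φ) (AC.comul a ⊗ₜ[K] HB.str.symm h) := by
      induction AC.comul a with
      | zero => simp
      | add s t hs ht => simp only [TensorProduct.add_tmul, map_add, hs, ht]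
      | tmul b c => rw [crossLeft_smashLaw_tmul hφ, TensorProduct.map_tmul]

theorem comul_mul_str_symm (hφ : IsHomBialgebraEnd HB φ) (x h : H) :
    HB.comul (HB.mul (φ x) (HB.str.symm h)) =
      tensorSquareMul HB.mul (TensorProduct.map φ φ (HB.comul x))
        (TensorProduct.map HB.str.symm.toLinearMap HB.str.symm.toLinearMap (HB.comul h)) := by
  rw [HB.comul_mul, hφ.map_comul]
  exact congrArg _ ((isHomBialgebraEnd_str_symm HB).map_comul h)

theorem crossRight_smashLaw_tmul (hcc : IsComoduleCoalgebra HB AC coact) (a : A) (g k : H) :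
    crossRight (smashLaw HB AC coact φ) (AC.str.symm a ⊗ₜ[K] (g ⊗ₜ[K] k)) =
      TensorProduct.map
        ((tensorSquareMul HB.mul).flip (HB.str.symm g ⊗ₜ[K] HB.str.symm k) ∘ₗ
          TensorProduct.map φ φ) AC.str.toLinearMap
        ((TensorProduct.assoc K H H A).symm
          (TensorProduct.map HB.str.symm.toLinearMap coact (coact a))) := by
  simp only [crossRight, LinearMap.comp_apply, LinearEquiv.coe_coe, TensorProduct.assoc_symm_tmul,
    LinearMap.rTensor_tmul, smashLaw_tmul, hcc.coact_str_symm]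
  induction coact a with
  | zero => simp
  | add s t hs ht => simp only [TensorProduct.add_tmul, map_add, hs, ht]
  | tmul x v =>
    simp only [TensorProduct.map_tmul, TensorProduct.assoc_tmul, LinearMap.lTensor_tmul,
      smashLaw_tmul, LinearEquiv.coe_coe, LinearEquiv.apply_symm_apply]
    induction coact v with
    | zero => simp
    | add s t hs ht => simp only [TensorProduct.tmul_add, map_add, hs, ht]
    | tmul y w => simp [tensorSquareMul_tmul]

theorem comul_smashLaw_right (hcc : IsComoduleCoalgebra HB AC coact)
    (hφ : IsHomBialgebraEnd HB φ) :
    TensorProduct.map HB.comul AC.str.symm.toLinearMap ∘ₗ smashLaw HB AC coact φ =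
      crossRight (smashLaw HB AC coact φ) ∘ₗ
        TensorProduct.map AC.str.symm.toLinearMap HB.comul := by
  refine TensorProduct.ext' fun a h => ?_
  set μ : H ⊗[K] H → H ⊗[K] H →ₗ[K] H ⊗[K] H := fun s =>
    (tensorSquareMul HB.mul).flip
      (TensorProduct.map HB.str.symm.toLinearMap HB.str.symm.toLinearMap s) ∘ₗ
      TensorProduct.map φ φ with hμ
  calc
    _ = TensorProduct.map (μ (HB.comul h)) AC.str.toLinearMap
          (TensorProduct.map HB.comul AC.str.symm.toLinearMap (coact a)) := by
      rw [LinearMap.comp_apply, smashLaw_tmul, TensorProduct.map_map, TensorProduct.map_map]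
      congr 2
      · ext x
        exact comul_mul_str_symm hφ x h
      · ext v
        simp
    _ = TensorProduct.map (μ (HB.comul h)) AC.str.toLinearMap
          ((TensorProduct.assoc K H H A).symm
            (TensorProduct.map HB.str.symm.toLinearMap coact (coact a))) := by
      rw [← hcc.comodule_coassoc, LinearEquiv.symm_apply_apply]
    _ = crossRight (smashLaw HB AC coact φ) (AC.str.symm a ⊗ₜ[K] HB.comul h) := by
      induction HB.comul h with
      | zero => simp [hμ]
      | add s t hs ht =>
        have hμ_add : μ (s + t) = μ s + μ t := by
          simp only [hμ, map_add, LinearMap.add_comp]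
        rw [hμ_add, TensorProduct.map_add_left, LinearMap.add_apply, hs, ht,
          TensorProduct.tmul_add, map_add]
      | tmul g k => exact (crossRight_smashLaw_tmul hcc a g k).symm

theorem counit_smashLaw_left (hcc : IsComoduleCoalgebra HB AC coact)
    (hφ : IsHomBialgebraEnd HB φ) :
    TensorProduct.map LinearMap.id AC.counit ∘ₗ smashLaw HB AC coact φ =
      (TensorProduct.comm K K H).toLinearMap ∘ₗ
        TensorProduct.map AC.counit LinearMap.id := by
  refine TensorProduct.ext' fun a h => ?_
  have hcounit_str : AC.counit ∘ₗ AC.str.toLinearMap = AC.counit := LinearMap.ext AC.counit_str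
  have hcounit : TensorProduct.map LinearMap.id AC.counit (coact a) =
      (AC.counit a • HB.one) ⊗ₜ[K] 1 :=
    (TensorProduct.rid K H).eq_symm_apply.mpr (hcc.counit_coact_one a)
  calc
    _ = TensorProduct.map (HB.mul.flip (HB.str.symm h) ∘ₗ φ) LinearMap.id
          (TensorProduct.map LinearMap.id AC.counit (coact a)) := by
      rw [LinearMap.comp_apply, smashLaw_tmul, TensorProduct.map_map, TensorProduct.map_map,
        hcounit_str]
      rfl
    _ = (AC.counit a • h) ⊗ₜ[K] 1 := by
      simp [hcounit, hφ.map_one, HB.one_mul]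
    _ = h ⊗ₜ[K] AC.counit a := by
      rw [TensorProduct.smul_tmul, smul_eq_mul, mul_one]

theorem counit_smashLaw_right (hcc : IsComoduleCoalgebra HB AC coact)
    (hφ : IsHomBialgebraEnd HB φ) :
    TensorProduct.map HB.counit LinearMap.id ∘ₗ smashLaw HB AC coact φ =
      (TensorProduct.comm K A K).toLinearMap ∘ₗ
        TensorProduct.map LinearMap.id HB.counit := by
  refine TensorProduct.ext' fun a h => ?_
  have hcounit_mul : HB.counit ∘ₗ HB.mul.flip (HB.str.symm h) ∘ₗ φ =
      HB.counit h • HB.counit := by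
    ext x
    have hcounit_symm : HB.counit (HB.str.symm h) = HB.counit h :=
      (isHomBialgebraEnd_str_symm HB).map_counit h
    simp [HB.counit_mul, hφ.map_counit, hcounit_symm, mul_comm]
  have hcounit : TensorProduct.map HB.counit LinearMap.id (coact a) = 1 ⊗ₜ[K] AC.str.symm a :=
    (TensorProduct.lid K A).eq_symm_apply.mpr (hcc.counit_coact a)
  calc
    _ = HB.counit h • TensorProduct.map LinearMap.id AC.str.toLinearMap
          (TensorProduct.map HB.counit LinearMap.id (coact a)) := by
      rw [LinearMap.comp_apply, smashLaw_tmul, TensorProduct.map_map, TensorProduct.map_map,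
        hcounit_mul, TensorProduct.map_smul_left]
      rfl
    _ = HB.counit h ⊗ₜ[K] a := by
      simp [hcounit, TensorProduct.smul_tmul']

theorem isHomDistributiveLaw_smashLaw (hcc : IsComoduleCoalgebra HB AC coact)
    (hφ : IsHomBialgebraEnd HB φ) :
    IsHomDistributiveLaw AC HB.toHomCoalgebraStr (smashLaw HB AC coact φ) where
  map_str := map_str_smashLaw hcc hφ
  comul_left := comul_smashLaw_left hcc hφ
  comul_right := comul_smashLaw_right hcc hφ
  counit_left := counit_smashLaw_left hcc hφ
  counit_right := counit_smashLaw_right hcc hφ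

theorem smash_coproduct_is_hom_coalgebra_general (hcc : IsComoduleCoalgebra HB AC coact)
    (hφ : IsHomBialgebraEnd HB φ) :
    ∃ D : HomCoalgebraStr K (A ⊗[K] H),
      (∀ (a : A) (h : H), D.comul (a ⊗ₜ[K] h) =
        mapMiddle (smashLaw HB AC coact φ) (AC.comul a ⊗ₜ[K] HB.comul h)) ∧
      (∀ (a : A) (h : H), D.counit (a ⊗ₜ[K] h) = AC.counit a * HB.counit h) ∧
      D.str = TensorProduct.congr AC.str HB.str :=
  ⟨(isHomDistributiveLaw_smashLaw hcc hφ).tensorHomCoalgebra, fun _ _ => rfl, fun _ _ => rfl, rfl⟩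

end SmashLaw

/-- Proposition 3.1: the `m`-Hom-smash coproduct is a monoidal Hom-coalgebra. -/
theorem smash_coproduct_is_hom_coalgebra
    {K H A : Type*} [Field K] [AddCommGroup H] [Module K H] [AddCommGroup A] [Module K A]
    (HB : HomBialgebraStr K H) (AC : HomCoalgebraStr K A)
    (coact : A →ₗ[K] H ⊗[K] A)
    (hcc : IsComoduleCoalgebra HB AC coact) (m : ℤ) :
    ∃ D : HomCoalgebraStr K (A ⊗[K] H),
      (∀ (a : A) (h : H), D.comul (a ⊗ₜ[K] h) = scComulElem HB AC coact m a h)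
      ∧ (∀ (a : A) (h : H), D.counit (a ⊗ₜ[K] h) = AC.counit a * HB.counit h)
      ∧ D.str = TensorProduct.congr AC.str HB.str := by
  simp only [scComulElem_eq_mapMiddle_smashLaw]
  exact smash_coproduct_is_hom_coalgebra_general hcc (zpow_mem (str_mem_homBialgebraAut HB) m)
end
end

section
/- Under the hypotheses of Theorem 3.5 (namely (A ♯_σ^× H, β ⊗ α) is a Radford [(m,k),m]-biproduct monoidal Hom-bialgebra, (H, α) is a σ-monoidal Hom-Hopf algebra with σ-antipode S_H, and S_A is a convolution inverse of id_A commuting with β), the map S(a ⊗ h) = (1_A ⊗ S_H(α^{m−1}(a₍₋₁₎)α⁻²(h)))·(S_A(a₍₀₎) ⊗ 1_H) satisfies S(a₁ ⊗ α^m(a₂₍₋₁₎)α⁻¹(h₁)) · (β(a₂₍₀₎) ⊗ h₂) = ε_A(a)ε_H(h) 1_A ⊗ 1_H for all a ∈ A and h ∈ H; that is, S is a left convolution inverse of the identity map of A ♯_σ^× H. -/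
open TensorProduct

noncomputable section

/-!
Since `(a ⊗ 1)(b ⊗ g) = ab ⊗ α(g)`, Hom-associativity rewrites the convolution of `S` with the
identity at `a ⊗ h` as
`(1 ⊗ S_H(α^{m-1}(a₁₍₋₁₎a₂₍₋₁₎)α⁻¹(h₁)))·(S_A(a₁₍₀₎)a₂₍₀₎ ⊗ h₂)`.
The comodule coalgebra axiom and the antipode `S_A` collapse the `A`-part, leaving
`ε(a) (1 ⊗ S_H(h₁))·(1 ⊗ h₂)`. Finally `(1 ⊗ x)(1 ⊗ y)` is the image under `β^{k+2} ⊗ α` of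
`σ(x₁, y₁) ⊗ x₂y₂`, so the `σ`-antipode identity applies.
-/

section General

variable {K M N : Type*} [CommSemiring K]
  [AddCommMonoid M] [Module K M] [AddCommMonoid N] [Module K N]

lemma semiconj_linearEquiv_zpow {φ : M → N} {e : M ≃ₗ[K] M} {f : N ≃ₗ[K] N}
    (h : Function.Semiconj φ e f) (n : ℤ) :
    Function.Semiconj φ (e ^ n : M ≃ₗ[K] M) (f ^ n : N ≃ₗ[K] N) := by
  have h_inv : Function.Semiconj φ (e⁻¹ : M ≃ₗ[K] M) (f⁻¹ : N ≃ₗ[K] N) :=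
    h.inverses_right e.apply_symm_apply f.symm_apply_apply
  induction n using Int.induction_on with
  | zero => exact fun _ => rfl
  | succ i ih => rw [zpow_add_one, zpow_add_one]; exact ih.comp_right h
  | pred i ih => rw [zpow_sub_one, zpow_sub_one]; exact ih.comp_right h_inv

lemma map_lift_tensorTensorTensorComm_tmul {M' N' P P' : Type*}
    [AddCommMonoid M'] [Module K M'] [AddCommMonoid N'] [Module K N']
    [AddCommMonoid P] [Module K P] [AddCommMonoid P'] [Module K P']
    (f : M →ₗ[K] N →ₗ[K] P) (g : M' →ₗ[K] N' →ₗ[K] P') (t : M ⊗[K] M') (n : N) (n' : N') :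
    TensorProduct.map (TensorProduct.lift f) (TensorProduct.lift g)
        (tensorTensorTensorComm K M M' N N' (t ⊗ₜ[K] (n ⊗ₜ[K] n')))
      = TensorProduct.map (f.flip n) (g.flip n') t := by
  induction t using TensorProduct.induction_on with
  | zero => simp only [zero_tmul, map_zero]
  | add s t hs ht => simp only [add_tmul, map_add, hs, ht]
  | tmul x y =>
    simp only [tensorTensorTensorComm_tmul, map_tmul, lift.tmul, LinearMap.flip_apply]

end General

namespace HomAlgebraStr

variable {K A : Type*} [Field K] [AddCommGroup A] [Module K A] (AA : HomAlgebraStr K A)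

lemma str_zpow_one (n : ℤ) : (AA.str ^ n) AA.one = AA.one := by
  have h : Function.Semiconj (fun _ : A => AA.one) (1 : A ≃ₗ[K] A) AA.str :=
    fun _ => AA.str_one.symm
  exact (semiconj_linearEquiv_zpow h n 0).symm

lemma str_zpow_mul (n : ℤ) (a b : A) :
    (AA.str ^ n) (AA.mul a b) = AA.mul ((AA.str ^ n) a) ((AA.str ^ n) b) := by
  have h : Function.Semiconj (TensorProduct.lift AA.mul) (TensorProduct.congr AA.str AA.str)
      AA.str := fun t => by
    induction t using TensorProduct.induction_on with
    | zero => simp only [map_zero]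
    | tmul a b => simp only [congr_tmul, lift.tmul, AA.str_mul]
    | add s t hs ht => simp only [map_add, hs, ht]
  simpa only [congr_zpow, congr_tmul, lift.tmul] using (semiconj_linearEquiv_zpow h n (a ⊗ₜ b)).symm

lemma str_mul_zpow_mul (m : ℤ) (a b c : A) :
    AA.str (AA.mul ((AA.str ^ (m - 1)) a)
        ((AA.str ^ (-2 : ℤ)) (AA.mul ((AA.str ^ m) b) ((AA.str ^ (-1 : ℤ)) c))))
      = AA.mul ((AA.str ^ (m - 1)) (AA.mul a b)) ((AA.str ^ (-1 : ℤ)) c) := by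
  have h_shift (n : ℤ) (d : A) : (AA.str ^ (n + 1)) d = AA.str ((AA.str ^ n) d) := by
    rw [add_comm, zpow_one_add, LinearEquiv.mul_apply]
  have h_add (i j : ℤ) (d : A) : (AA.str ^ i) ((AA.str ^ j) d) = (AA.str ^ (i + j)) d := by
    rw [zpow_add, LinearEquiv.mul_apply]
  calc
    _ = AA.mul (AA.str ((AA.str ^ (m - 1)) a))
          (AA.mul ((AA.str ^ (m - 1)) b) ((AA.str ^ (-2 : ℤ)) c)) := by
      rw [AA.str_mul, ← h_shift (-2), AA.str_zpow_mul, h_add, h_add]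
      ring_nf
    _ = AA.mul (AA.mul ((AA.str ^ (m - 1)) a) ((AA.str ^ (m - 1)) b))
          (AA.str ((AA.str ^ (-2 : ℤ)) c)) := AA.hom_assoc _ _ _
    _ = AA.mul ((AA.str ^ (m - 1)) (AA.mul a b)) ((AA.str ^ (-1 : ℤ)) c) := by
      rw [← AA.str_zpow_mul, ← h_shift]
      norm_num

end HomAlgebraStr

namespace HomBialgebraStr

variable {K H : Type*} [Field K] [AddCommGroup H] [Module K H] (HB : HomBialgebraStr K H)

lemma counit_str_zpow (n : ℤ) (h : H) : HB.counit ((HB.str ^ n) h) = HB.counit h := by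
  have h_semi : Function.Semiconj HB.counit HB.str (1 : K ≃ₗ[K] K) := HB.counit_str
  simpa only [one_zpow] using! semiconj_linearEquiv_zpow h_semi n h

lemma comul_str_zpow (n : ℤ) (h : H) :
    HB.comul ((HB.str ^ n) h)
      = TensorProduct.map (HB.str ^ n).toLinearMap (HB.str ^ n).toLinearMap (HB.comul h) := by
  have h_semi : Function.Semiconj HB.comul HB.str (TensorProduct.congr HB.str HB.str) :=
    HB.comul_str
  simpa only [congr_zpow] using! semiconj_linearEquiv_zpow h_semi n h

end HomBialgebraStr

section CrossedProduct

variable {K H A : Type*} [Field K] [AddCommGroup H] [Module K H] [AddCommGroup A] [Module K A]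

/-- The `(m,k)`-Hom-crossed product algebra on `A ⊗ H`: the algebra part of a Radford
`[(m,k),m]`-biproduct, with no coalgebra structure on `A ⊗ H` required. -/
structure IsHomCrossedProduct (HB : HomBialgebraStr K H) (AA : HomAlgebraStr K A)
    (act : H →ₗ[K] A →ₗ[K] A) (σ : H →ₗ[K] H →ₗ[K] A) (m k : ℤ)
    (B : HomAlgebraStr K (A ⊗[K] H)) : Prop where
  mul_def : ∀ (a : A) (h : H) (b : A) (g : H),
    B.mul (a ⊗ₜ[K] h) (b ⊗ₜ[K] g) = cpMulElem HB AA act σ m k a h b g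
  one_def : B.one = AA.one ⊗ₜ[K] HB.one
  str_def : B.str = TensorProduct.congr AA.str HB.str

variable {HB : HomBialgebraStr K H} {AA : HomAlgebraStr K A}
  {act : H →ₗ[K] A →ₗ[K] A} {σ : H →ₗ[K] H →ₗ[K] A} {m k : ℤ} {B : HomAlgebraStr K (A ⊗[K] H)}

namespace IsHomCrossedProduct

lemma str_tmul (hB : IsHomCrossedProduct HB AA act σ m k B) (a : A) (h : H) :
    B.str (a ⊗ₜ[K] h) = AA.str a ⊗ₜ[K] HB.str h := by
  rw [hB.str_def, congr_tmul]

lemma str_zpow_tmul (hB : IsHomCrossedProduct HB AA act σ m k B) (n : ℤ) (a : A) (h : H) :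
    (B.str ^ n) (a ⊗ₜ[K] h) = (AA.str ^ n) a ⊗ₜ[K] (HB.str ^ n) h := by
  rw [hB.str_def, congr_zpow, congr_tmul]

lemma mul_tmul_tmul (hB : IsHomCrossedProduct HB AA act σ m k B) (a b : A) (h g : H) :
    B.mul (a ⊗ₜ[K] h) (b ⊗ₜ[K] g)
      = TensorProduct.map (AA.mul a ∘ₗ AA.str.symm.toLinearMap) LinearMap.id
          (B.mul (AA.one ⊗ₜ[K] h) (b ⊗ₜ[K] g)) := by
  have h_cancel : (AA.mul a ∘ₗ AA.str.symm.toLinearMap) ∘ₗ AA.mul AA.one = AA.mul a := by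
    ext c
    simp [AA.one_mul]
  rw [hB.mul_def, hB.mul_def, cpMulElem, cpMulElem]
  conv_rhs => rw [TensorProduct.map_map, LinearMap.id_comp, ← LinearMap.comp_assoc, h_cancel]

lemma tmul_one_mul (hB : IsHomCrossedProduct HB AA act σ m k B) (a b : A) (g : H) :
    B.mul (a ⊗ₜ[K] HB.one) (b ⊗ₜ[K] g) = AA.mul a b ⊗ₜ[K] HB.str g := by
  rw [hB.mul_tmul_tmul, ← hB.one_def, B.one_mul, hB.str_tmul]
  simp

end IsHomCrossedProduct

lemma mul_act_one_cocycle (hact : ∀ h : H, act h AA.one = HB.counit h • AA.one) (h g : H) :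
    TensorProduct.lift AA.mul (TensorProduct.map
      (act.flip AA.one ∘ₗ (HB.str ^ m).toLinearMap)
      (TensorProduct.lift σ ∘ₗ
        TensorProduct.map (HB.str ^ (k + 1)).toLinearMap (HB.str ^ k).toLinearMap)
      (TensorProduct.assoc K H H H (HB.comul h ⊗ₜ[K] g)))
    = AA.str (σ ((HB.str ^ k) h) ((HB.str ^ k) g)) := by
  have h_counit : TensorProduct.lift AA.mul ∘ₗ TensorProduct.map
        (act.flip AA.one ∘ₗ (HB.str ^ m).toLinearMap)
        (TensorProduct.lift σ ∘ₗ
          TensorProduct.map (HB.str ^ (k + 1)).toLinearMap (HB.str ^ k).toLinearMap) ∘ₗ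
        (TensorProduct.assoc K H H H).toLinearMap
      = AA.str.toLinearMap ∘ₗ TensorProduct.lift σ ∘ₗ TensorProduct.map
          ((HB.str ^ (k + 1)).toLinearMap ∘ₗ (TensorProduct.lid K H).toLinearMap ∘ₗ
            TensorProduct.map HB.counit LinearMap.id)
          (HB.str ^ k).toLinearMap :=
    ext_threefold fun u v g => by simp [hact, HB.counit_str_zpow, AA.one_mul]
  calc
    _ = _ := LinearMap.congr_fun h_counit (HB.comul h ⊗ₜ[K] g)
    _ = AA.str (σ ((HB.str ^ (k + 1)) (HB.str.symm h)) ((HB.str ^ k) g)) := by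
      simp [HB.counit_comul_left]
    _ = AA.str (σ ((HB.str ^ k) h) ((HB.str ^ k) g)) := by
      rw [zpow_add_one, LinearEquiv.mul_apply, LinearEquiv.apply_symm_apply]

namespace IsHomCrossedProduct

lemma one_tmul_mul_one_tmul_eq_map_cocycle_zpow (hB : IsHomCrossedProduct HB AA act σ m k B)
    (hact : ∀ h : H, act h AA.one = HB.counit h • AA.one) (x y : H) :
    B.mul (AA.one ⊗ₜ[K] x) (AA.one ⊗ₜ[K] y)
      = TensorProduct.map
          ((AA.str ^ (2 : ℤ)).toLinearMap ∘ₗ TensorProduct.lift σ ∘ₗ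
            TensorProduct.map (HB.str ^ k).toLinearMap (HB.str ^ k).toLinearMap)
          (HB.str.toLinearMap ∘ₗ TensorProduct.lift HB.mul)
          (tensorTensorTensorComm K H H H H (HB.comul x ⊗ₜ[K] HB.comul y)) := by
  rw [hB.mul_def, cpMulElem, AA.str_zpow_one, TensorProduct.map_map, LinearMap.comp_id]
  congr 2
  refine TensorProduct.ext' fun h g => ?_
  simp [mul_act_one_cocycle hact, AA.one_mul, zpow_ofNat, pow_two]

lemma one_tmul_mul_one_tmul (hB : IsHomCrossedProduct HB AA act σ m k B)
    (hact : ∀ h : H, act h AA.one = HB.counit h • AA.one) (x y : H) :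
    B.mul (AA.one ⊗ₜ[K] x) (AA.one ⊗ₜ[K] y)
      = TensorProduct.map (AA.str ^ (k + 2)).toLinearMap HB.str.toLinearMap
          (TensorProduct.map (TensorProduct.lift σ) (TensorProduct.lift HB.mul)
            (tensorTensorTensorComm K H H H H (HB.comul x ⊗ₜ[K] HB.comul y))) := by
  have h_shift : B.mul (AA.one ⊗ₜ[K] x) (AA.one ⊗ₜ[K] y)
      = (B.str ^ k) (B.mul (AA.one ⊗ₜ[K] (HB.str ^ (-k)) x) (AA.one ⊗ₜ[K] (HB.str ^ (-k)) y)) := by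
    simp only [B.str_zpow_mul, hB.str_zpow_tmul, AA.str_zpow_one, ← LinearEquiv.mul_apply,
      ← zpow_add, add_neg_cancel, zpow_zero, LinearEquiv.coe_one, id_eq]
  have h_cancel (v : H) : (HB.str ^ k) (HB.str ((HB.str ^ k).symm v)) = HB.str v := by
    rw [← LinearEquiv.mul_apply, ← zpow_add_one, add_comm, zpow_one_add, LinearEquiv.mul_apply,
      LinearEquiv.apply_symm_apply]
  have h_pull : (B.str ^ k).toLinearMap ∘ₗ
        TensorProduct.map
          ((AA.str ^ (2 : ℤ)).toLinearMap ∘ₗ TensorProduct.lift σ ∘ₗ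
            TensorProduct.map (HB.str ^ k).toLinearMap (HB.str ^ k).toLinearMap)
          (HB.str.toLinearMap ∘ₗ TensorProduct.lift HB.mul) ∘ₗ
        (tensorTensorTensorComm K H H H H).toLinearMap ∘ₗ
        TensorProduct.map
          (TensorProduct.map (HB.str ^ (-k)).toLinearMap (HB.str ^ (-k)).toLinearMap)
          (TensorProduct.map (HB.str ^ (-k)).toLinearMap (HB.str ^ (-k)).toLinearMap)
      = TensorProduct.map (AA.str ^ (k + 2)).toLinearMap HB.str.toLinearMap ∘ₗ
        TensorProduct.map (TensorProduct.lift σ) (TensorProduct.lift HB.mul) ∘ₗ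
        (tensorTensorTensorComm K H H H H).toLinearMap :=
    TensorProduct.ext_fourfold' fun u v w z => by
      simp [hB.str_zpow_tmul, zpow_add, HB.str_zpow_mul, HB.str_mul, h_cancel]
  rw [h_shift, hB.one_tmul_mul_one_tmul_eq_map_cocycle_zpow hact, HB.comul_str_zpow,
    HB.comul_str_zpow]
  exact LinearMap.congr_fun h_pull (HB.comul x ⊗ₜ[K] HB.comul y)

lemma lift_mul_one_tmul_antipode (hB : IsHomCrossedProduct HB AA act σ m k B)
    (hact : ∀ h : H, act h AA.one = HB.counit h • AA.one) {SH : H →ₗ[K] H}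
    (hSH : ∀ h : H,
      TensorProduct.map (TensorProduct.lift σ) (TensorProduct.lift HB.mul)
          (tensorTensorTensorComm K H H H H
            (TensorProduct.map (HB.comul ∘ₗ SH) HB.comul (HB.comul h)))
        = HB.counit h • (AA.one ⊗ₜ[K] HB.one)) (h : H) :
    TensorProduct.lift B.mul
        (TensorProduct.map (TensorProduct.mk K A H AA.one ∘ₗ SH) (TensorProduct.mk K A H AA.one)
          (HB.comul h))
      = HB.counit h • (AA.one ⊗ₜ[K] HB.one) := by
  have h_mul : TensorProduct.lift B.mul ∘ₗ
        TensorProduct.map (TensorProduct.mk K A H AA.one ∘ₗ SH) (TensorProduct.mk K A H AA.one)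
      = TensorProduct.map (AA.str ^ (k + 2)).toLinearMap HB.str.toLinearMap ∘ₗ
        TensorProduct.map (TensorProduct.lift σ) (TensorProduct.lift HB.mul) ∘ₗ
        (tensorTensorTensorComm K H H H H).toLinearMap ∘ₗ
        TensorProduct.map (HB.comul ∘ₗ SH) HB.comul :=
    TensorProduct.ext' fun x y => by simp [hB.one_tmul_mul_one_tmul hact]
  calc
    _ = _ := LinearMap.congr_fun h_mul (HB.comul h)
    _ = TensorProduct.map (AA.str ^ (k + 2)).toLinearMap HB.str.toLinearMap
          (HB.counit h • (AA.one ⊗ₜ[K] HB.one)) := by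
      rw [← hSH h]
      rfl
    _ = HB.counit h • (AA.one ⊗ₜ[K] HB.one) := by
      simp only [map_smul, map_tmul, LinearEquiv.coe_coe, AA.str_zpow_one, HB.str_one]

end IsHomCrossedProduct
end CrossedProduct

section Antipode

variable {K H A : Type*} [Field K] [AddCommGroup H] [Module K H] [AddCommGroup A] [Module K A]
variable {HB : HomBialgebraStr K H} {AA : HomAlgebraStr K A} {AC : HomCoalgebraStr K A}
  {act : H →ₗ[K] A →ₗ[K] A} {coact : A →ₗ[K] H ⊗[K] A} {σ : H →ₗ[K] H →ₗ[K] A} {m k : ℤ}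
  {SH : H →ₗ[K] H} {SA : A →ₗ[K] A}

lemma coact_mul_convInv
    (hcoact_comul : ∀ a : A,
      TensorProduct.map LinearMap.id AC.comul (coact a)
        = TensorProduct.map (TensorProduct.lift HB.mul) LinearMap.id
            (tensorTensorTensorComm K H A H A (TensorProduct.map coact coact (AC.comul a))))
    (hcounit_coact : ∀ a : A,
      TensorProduct.rid K H (TensorProduct.map LinearMap.id AC.counit (coact a))
        = AC.counit a • HB.one)
    (hSA : ∀ a : A, TensorProduct.lift (AA.mul ∘ₗ SA) (AC.comul a) = AC.counit a • AA.one)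
    (a : A) :
    TensorProduct.map (TensorProduct.lift HB.mul) (TensorProduct.lift (AA.mul ∘ₗ SA))
        (tensorTensorTensorComm K H A H A (TensorProduct.map coact coact (AC.comul a)))
      = AC.counit a • (HB.one ⊗ₜ[K] AA.one) := by
  have h_counit : TensorProduct.map LinearMap.id (TensorProduct.lift (AA.mul ∘ₗ SA)) ∘ₗ
        TensorProduct.map LinearMap.id AC.comul
      = (TensorProduct.mk K H A).flip AA.one ∘ₗ (TensorProduct.rid K H).toLinearMap ∘ₗ
        TensorProduct.map LinearMap.id AC.counit :=
    TensorProduct.ext' fun x b => by simp [hSA]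
  calc
    _ = TensorProduct.map LinearMap.id (TensorProduct.lift (AA.mul ∘ₗ SA))
          (TensorProduct.map LinearMap.id AC.comul (coact a)) := by
      rw [hcoact_comul, TensorProduct.map_map, LinearMap.id_comp, LinearMap.comp_id]
    _ = _ := LinearMap.congr_fun h_counit (coact a)
    _ = _ := by simp [hcounit_coact, TensorProduct.smul_tmul']

/-- The map `(x ⊗ b) ⊗ (g ⊗ h) ↦ (1 ⊗ S_H(α^{m-1}(x)α⁻¹(g)))·(b ⊗ h)`. Convolving the Radford
antipode with the identity amounts to applying it to `a₁₍₋₁₎a₂₍₋₁₎ ⊗ S_A(a₁₍₀₎)a₂₍₀₎` and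
`h₁ ⊗ h₂`. -/
def radfordContraction (HB : HomBialgebraStr K H) (AA : HomAlgebraStr K A)
    (Bmul : (A ⊗[K] H) →ₗ[K] (A ⊗[K] H) →ₗ[K] (A ⊗[K] H)) (SH : H →ₗ[K] H) (m : ℤ) :
    (H ⊗[K] A) ⊗[K] (H ⊗[K] H) →ₗ[K] A ⊗[K] H :=
  TensorProduct.lift Bmul ∘ₗ
    TensorProduct.map
      (TensorProduct.mk K A H AA.one ∘ₗ SH ∘ₗ TensorProduct.lift HB.mul ∘ₗ
        TensorProduct.map (HB.str ^ (m - 1)).toLinearMap (HB.str ^ (-1 : ℤ)).toLinearMap)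
      LinearMap.id ∘ₗ
    (tensorTensorTensorComm K H A H H).toLinearMap

lemma radfordContraction_tmul (Bmul : (A ⊗[K] H) →ₗ[K] (A ⊗[K] H) →ₗ[K] (A ⊗[K] H))
    (x g h : H) (b : A) :
    radfordContraction HB AA Bmul SH m ((x ⊗ₜ[K] b) ⊗ₜ[K] (g ⊗ₜ[K] h))
      = Bmul (AA.one ⊗ₜ[K] SH (HB.mul ((HB.str ^ (m - 1)) x) ((HB.str ^ (-1 : ℤ)) g)))
          (b ⊗ₜ[K] h) := by
  simp only [radfordContraction, LinearMap.comp_apply, LinearEquiv.coe_coe,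
    tensorTensorTensorComm_tmul, map_tmul, lift.tmul, mk_apply, LinearMap.id_apply]

lemma radfordContraction_one_tmul (Bmul : (A ⊗[K] H) →ₗ[K] (A ⊗[K] H) →ₗ[K] (A ⊗[K] H))
    (t : H ⊗[K] H) :
    radfordContraction HB AA Bmul SH m ((HB.one ⊗ₜ[K] AA.one) ⊗ₜ[K] t)
      = TensorProduct.lift Bmul
          (TensorProduct.map (TensorProduct.mk K A H AA.one ∘ₗ SH)
            (TensorProduct.mk K A H AA.one) t) := by
  induction t using TensorProduct.induction_on with
  | zero => simp only [tmul_zero, map_zero]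
  | add s t hs ht => simp only [tmul_add, map_add, hs, ht]
  | tmul g h =>
    simp only [radfordContraction_tmul, HB.str_zpow_one, HB.one_mul, ← LinearEquiv.mul_apply,
      ← zpow_one_add, add_neg_cancel, zpow_zero, LinearEquiv.coe_one, id_eq, map_tmul, lift.tmul,
      LinearMap.comp_apply, mk_apply]

variable {B : HomAlgebraStr K (A ⊗[K] H)}

lemma IsHomCrossedProduct.mul_antipode_tmul_mul (hB : IsHomCrossedProduct HB AA act σ m k B)
    (hSH : ∀ h : H, SH (HB.str h) = HB.str (SH h)) (b c : A) (x h : H) :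
    B.mul (B.mul (AA.one ⊗ₜ[K] SH x) (b ⊗ₜ[K] HB.one)) (AA.str c ⊗ₜ[K] h)
      = B.mul (AA.one ⊗ₜ[K] SH (HB.str x)) (AA.mul b c ⊗ₜ[K] h) := by
  have h_shift : AA.str c ⊗ₜ[K] h = B.str (c ⊗ₜ[K] HB.str.symm h) := by
    rw [hB.str_tmul, LinearEquiv.apply_symm_apply]
  rw [h_shift, ← B.hom_assoc, hB.tmul_one_mul, hB.str_tmul, AA.str_one,
    LinearEquiv.apply_symm_apply, hSH]

lemma IsHomCrossedProduct.radfordAntipodeElem_mul (hB : IsHomCrossedProduct HB AA act σ m k B)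
    (hSH : ∀ h : H, SH (HB.str h) = HB.str (SH h)) (a c : A) (z g h : H) :
    B.mul (radfordAntipodeElem HB AA coact B.mul SH SA m a
        (HB.mul ((HB.str ^ m) z) ((HB.str ^ (-1 : ℤ)) g))) (AA.str c ⊗ₜ[K] h)
      = radfordContraction HB AA B.mul SH m
          (TensorProduct.map (HB.mul.flip z) ((AA.mul ∘ₗ SA).flip c) (coact a) ⊗ₜ[K]
            (g ⊗ₜ[K] h)) := by
  rw [radfordAntipodeElem]
  induction coact a using TensorProduct.induction_on with
  | zero => simp only [map_zero, zero_tmul, LinearMap.zero_apply]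
  | add s t hs ht => simp only [map_add, add_tmul, LinearMap.add_apply, hs, ht]
  | tmul x b =>
    simp only [map_tmul, lift.tmul, LinearMap.comp_apply, LinearEquiv.coe_coe,
      LinearMap.flip_apply, mk_apply, radfordContraction_tmul, hB.mul_antipode_tmul_mul hSH,
      HB.str_mul_zpow_mul]

lemma IsHomCrossedProduct.radfordAntipode_convolution_id
    (hB : IsHomCrossedProduct HB AA act σ m k B) (hstr : AC.str = AA.str)
    (hSH : ∀ h : H, SH (HB.str h) = HB.str (SH h)) {SAH : A ⊗[K] H →ₗ[K] A ⊗[K] H}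
    (hSAH : ∀ (a : A) (h : H),
      SAH (a ⊗ₜ[K] h) = radfordAntipodeElem HB AA coact B.mul SH SA m a h) (a : A) (h : H) :
    TensorProduct.lift B.mul
        (TensorProduct.map SAH LinearMap.id (scComulElem HB AC coact m a h))
      = radfordContraction HB AA B.mul SH m
          (TensorProduct.map (TensorProduct.lift HB.mul) (TensorProduct.lift (AA.mul ∘ₗ SA))
            (tensorTensorTensorComm K H A H A (TensorProduct.map coact coact (AC.comul a))) ⊗ₜ[K]
              HB.comul h) := by
  rw [scComulElem, hstr]
  induction AC.comul a using TensorProduct.induction_on with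
  | zero => simp only [map_zero, zero_tmul]
  | add s t hs ht => simp only [map_add, add_tmul, hs, ht]
  | tmul a₁ a₂ =>
    induction HB.comul h using TensorProduct.induction_on with
    | zero => simp only [map_zero, tmul_zero]
    | add s t hs ht => simp only [map_add, tmul_add, hs, ht]
    | tmul g h =>
      simp only [map_tmul, LinearMap.id_apply]
      induction coact a₂ using TensorProduct.induction_on with
      | zero => simp only [map_zero, zero_tmul, tmul_zero]
      | add s t hs ht => simp only [map_add, add_tmul, tmul_add, hs, ht]
      | tmul z c =>
        simp only [map_lift_tensorTensorTensorComm_tmul, assoc_symm_tmul,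
          tensorTensorTensorComm_tmul, map_tmul, LinearMap.comp_apply, LinearEquiv.coe_coe,
          assoc_tmul, lift.tmul, LinearMap.id_apply, hSAH, hB.radfordAntipodeElem_mul hSH]

end Antipode

section Biproduct

variable {K H A : Type*} [Field K] [AddCommGroup H] [Module K H] [AddCommGroup A] [Module K A]
variable {HB : HomBialgebraStr K H} {AA : HomAlgebraStr K A} {AC : HomCoalgebraStr K A}
  {act : H →ₗ[K] A →ₗ[K] A} {coact : A →ₗ[K] H ⊗[K] A} {σ : H →ₗ[K] H →ₗ[K] A} {m k : ℤ}
  {B : HomBialgebraStr K (A ⊗[K] H)}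

lemma rid_map_counit_scComulElem
    (hcounit_coact : ∀ a : A,
      TensorProduct.rid K H (TensorProduct.map LinearMap.id AC.counit (coact a))
        = AC.counit a • HB.one)
    {ε : A ⊗[K] H →ₗ[K] K} (hε : ∀ (a : A) (h : H), ε (a ⊗ₜ[K] h) = AC.counit a * HB.counit h)
    (a : A) (h : H) :
    TensorProduct.rid K (A ⊗[K] H)
        (TensorProduct.map LinearMap.id ε (scComulElem HB AC coact m a h))
      = AC.str.symm a ⊗ₜ[K] HB.str.symm h := by
  have h_coact (a₁ : A) (Z : H ⊗[K] A) (g h : H) :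
      TensorProduct.rid K (A ⊗[K] H) (TensorProduct.map LinearMap.id ε
        (TensorProduct.map
          (TensorProduct.map LinearMap.id
              (TensorProduct.lift HB.mul ∘ₗ
                TensorProduct.map (HB.str ^ m).toLinearMap (HB.str ^ (-1 : ℤ)).toLinearMap) ∘ₗ
            (TensorProduct.assoc K A H H).toLinearMap)
          (TensorProduct.map AC.str.toLinearMap LinearMap.id)
          (tensorTensorTensorComm K (A ⊗[K] H) A H H
            ((TensorProduct.assoc K A H A).symm (a₁ ⊗ₜ[K] Z) ⊗ₜ[K] (g ⊗ₜ[K] h)))))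
      = HB.counit h • (a₁ ⊗ₜ[K] HB.mul
          ((HB.str ^ m) (TensorProduct.rid K H (TensorProduct.map LinearMap.id AC.counit Z)))
          ((HB.str ^ (-1 : ℤ)) g)) := by
    induction Z using TensorProduct.induction_on with
    | zero => simp
    | add s t hs ht =>
      simp only [map_add, add_tmul, tmul_add, LinearMap.add_apply, smul_add, hs, ht]
    | tmul z c => simp [hε, AC.counit_str, mul_comm, smul_smul]
  rw [← AC.counit_comul_right, ← HB.counit_comul_right, scComulElem]
  induction AC.comul a using TensorProduct.induction_on with
  | zero => simp only [map_zero, zero_tmul]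
  | add s t hs ht => simp only [map_add, add_tmul, hs, ht]
  | tmul a₁ a₂ =>
    induction HB.comul h using TensorProduct.induction_on with
    | zero => simp only [map_zero, tmul_zero]
    | add s t hs ht => simp only [map_add, tmul_add, hs, ht]
    | tmul g h =>
      rw [map_tmul, h_coact, hcounit_coact]
      simp [HB.str_zpow_one, HB.one_mul, smul_tmul', smul_smul]

namespace IsRadfordBiproduct

lemma isHomCrossedProduct (hB : IsRadfordBiproduct HB AA AC act coact σ m k B) :
    IsHomCrossedProduct HB AA act σ m k B.toHomAlgebraStr where
  mul_def := hB.mul_def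
  one_def := hB.one_def
  str_def := hB.str_def

lemma str_eq (hB : IsRadfordBiproduct HB AA AC act coact σ m k B)
    (hcounit_coact : ∀ a : A,
      TensorProduct.rid K H (TensorProduct.map LinearMap.id AC.counit (coact a))
        = AC.counit a • HB.one) : AC.str = AA.str := by
  have h_symm (a : A) :
      AC.str.symm a ⊗ₜ[K] HB.str.symm HB.one = AA.str.symm a ⊗ₜ[K] HB.str.symm HB.one := by
    rw [← rid_map_counit_scComulElem hcounit_coact hB.counit_def, ← hB.comul_def,
      B.counit_comul_right, hB.str_def, congr_symm_tmul]
  have h_counit : HB.counit (HB.str.symm HB.one) = 1 := by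
    rw [← HB.counit_str, LinearEquiv.apply_symm_apply, HB.counit_one]
  have h_symm_eq : AC.str.symm = AA.str.symm := LinearEquiv.ext fun a => by
    simpa only [Function.comp_apply, map_tmul, LinearMap.id_apply, rid_tmul, h_counit,
      one_smul] using
      congrArg (TensorProduct.rid K A ∘ TensorProduct.map LinearMap.id HB.counit) (h_symm a)
  rw [← AC.str.symm_symm, h_symm_eq, LinearEquiv.symm_symm]

end IsRadfordBiproduct
end Biproduct

theorem radford_antipode_left_convolution_inverse_general
    {K H A : Type*} [Field K] [AddCommGroup H] [Module K H] [AddCommGroup A] [Module K A]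
    (HB : HomBialgebraStr K H) (AA : HomAlgebraStr K A) (AC : HomCoalgebraStr K A)
    (hstr : AC.str = AA.str)
    (act : H →ₗ[K] A →ₗ[K] A) (hact : ∀ h : H, act h AA.one = HB.counit h • AA.one)
    (coact : A →ₗ[K] H ⊗[K] A)
    (hcoact_comul : ∀ a : A,
      TensorProduct.map LinearMap.id AC.comul (coact a)
        = TensorProduct.map (TensorProduct.lift HB.mul) LinearMap.id
            (tensorTensorTensorComm K H A H A (TensorProduct.map coact coact (AC.comul a))))
    (hcounit_coact : ∀ a : A,
      TensorProduct.rid K H (TensorProduct.map LinearMap.id AC.counit (coact a))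
        = AC.counit a • HB.one)
    (σ : H →ₗ[K] H →ₗ[K] A) (m k : ℤ) (B : HomAlgebraStr K (A ⊗[K] H))
    (hB : IsHomCrossedProduct HB AA act σ m k B)
    (SH : H →ₗ[K] H) (hSHstr : ∀ h : H, SH (HB.str h) = HB.str (SH h))
    (hSH : ∀ h : H,
      TensorProduct.map (TensorProduct.lift σ) (TensorProduct.lift HB.mul)
          (tensorTensorTensorComm K H H H H
            (TensorProduct.map (HB.comul ∘ₗ SH) HB.comul (HB.comul h)))
        = HB.counit h • (AA.one ⊗ₜ[K] HB.one))
    (SA : A →ₗ[K] A)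
    (hSA : ∀ a : A, TensorProduct.lift (AA.mul ∘ₗ SA) (AC.comul a) = AC.counit a • AA.one)
    (SAH : A ⊗[K] H →ₗ[K] A ⊗[K] H)
    (hSAH : ∀ (a : A) (h : H),
      SAH (a ⊗ₜ[K] h) = radfordAntipodeElem HB AA coact B.mul SH SA m a h) (a : A) (h : H) :
    TensorProduct.lift B.mul (TensorProduct.map SAH LinearMap.id (scComulElem HB AC coact m a h))
      = (AC.counit a * HB.counit h) • (AA.one ⊗ₜ[K] HB.one) := by
  calc
    _ = radfordContraction HB AA B.mul SH m
          ((AC.counit a • (HB.one ⊗ₜ[K] AA.one)) ⊗ₜ[K] HB.comul h) := by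
      rw [hB.radfordAntipode_convolution_id hstr hSHstr hSAH,
        coact_mul_convInv hcoact_comul hcounit_coact hSA]
    _ = AC.counit a • TensorProduct.lift B.mul
          (TensorProduct.map (TensorProduct.mk K A H AA.one ∘ₗ SH)
            (TensorProduct.mk K A H AA.one) (HB.comul h)) := by
      rw [← smul_tmul', map_smul, radfordContraction_one_tmul]
    _ = (AC.counit a * HB.counit h) • (AA.one ⊗ₜ[K] HB.one) := by
      rw [hB.lift_mul_one_tmul_antipode hact hSH, smul_smul]

/-- The key computation in the proof of Theorem 3.5: the Radford antipode formula gives a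
left convolution inverse of the identity. -/
theorem radford_antipode_left_convolution_inverse
    {K H A : Type*} [Field K] [AddCommGroup H] [Module K H] [AddCommGroup A] [Module K A]
    (HB : HomBialgebraStr K H) (AA : HomAlgebraStr K A) (AC : HomCoalgebraStr K A)
    (act : H →ₗ[K] A →ₗ[K] A) (hact : IsWeakModuleAlgebra HB AA act)
    (coact : A →ₗ[K] H ⊗[K] A) (hcc : IsComoduleCoalgebra HB AC coact)
    (σ : H →ₗ[K] H →ₗ[K] A) (m k : ℤ)
    (B : HomBialgebraStr K (A ⊗[K] H))
    (hB : IsRadfordBiproduct HB AA AC act coact σ m k B)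
    (SH : H →ₗ[K] H) (hSH : IsSigmaAntipode HB AA σ SH)
    (SA : A →ₗ[K] A) (hSA : IsConvInvOfId AA AC SA)
    (hSAstr : ∀ a : A, SA (AA.str a) = AA.str (SA a))
    (SAH : A ⊗[K] H →ₗ[K] A ⊗[K] H)
    (hSAH : ∀ (a : A) (h : H),
      SAH (a ⊗ₜ[K] h) = radfordAntipodeElem HB AA coact B.mul SH SA m a h) :
    ∀ (a : A) (h : H),
      TensorProduct.lift B.mul
        (TensorProduct.map SAH (LinearMap.id : A ⊗[K] H →ₗ[K] A ⊗[K] H)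
          (scComulElem HB AC coact m a h))
      = (AC.counit a * HB.counit h) • (AA.one ⊗ₜ[K] HB.one) :=
  radford_antipode_left_convolution_inverse_general HB AA AC (hB.str_eq hcc.counit_coact_one)
    act hact.act_one coact hcc.coact_comul hcc.counit_coact_one σ m k B.toHomAlgebraStr
    hB.isHomCrossedProduct SH hSH.antipode_str hSH.left SA hSA.1 SAH hSAH
end
end
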